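/- arXiv:2603.29253 — 2 statements merged into one kernel-verified Lean document; each statement's English description precedes it below -/
import Mathlib

section
/- Let A ⊂ ℝ² be a compact convex set with nonempty interior that is symmetric with respect to both coordinate axes (i.e. (x,y) ∈ A implies (−x,y) ∈ A and (x,−y) ∈ A). Set a := max{x : (x,0) ∈ A} and b := max{y : (0,y) ∈ A}. Then min_{m ∈ ℤ²∖{0}} sup_{x∈A} ⟨m,x⟩ = min(a,b), and for every vector v ∈ ℝ² with interior(A) + v ⊆ ℝ²_{>0} and every normalized symplectic capacity c on subsets of ℝ⁴, c(μ⁻¹(interior(A)+v)) = 2·min(a,b). (This is the statement that every ball-normalized capacity of the codisc bundle D_F*𝕋² of a flat reversible Finsler metric F on 𝕋² with F(q₁,q₂,v₁,v₂) = F(q₁,q₂,v₁,−v₂) equals twice its systole.) -/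
open Set
open scoped Pointwise ENNReal

noncomputable section

/-- The standard symplectic form `ω₀` on `ℝ⁴ ≅ ℂ²`:
`ω₀(u,v) = Σⱼ (u_{xⱼ} v_{yⱼ} - u_{yⱼ} v_{xⱼ}) = Σⱼ Im(conj(uⱼ) · vⱼ)`. -/
def stdSymp4 (u v : ℂ × ℂ) : ℝ :=
  ((starRingEnd ℂ) u.1 * v.1).im + ((starRingEnd ℂ) u.2 * v.2).im

/-- `U` symplectically embeds into `V` inside `ℝ⁴ ≅ ℂ²`: there is a smooth injective
map on `U` with image in `V` whose derivative preserves `ω₀`. -/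
def SymplecticEmbeds4 (U V : Set (ℂ × ℂ)) : Prop :=
  ∃ f : ℂ × ℂ → ℂ × ℂ,
    ContDiffOn ℝ (⊤ : ℕ∞) f U ∧ Set.InjOn f U ∧ Set.MapsTo f U V ∧
    ∀ x ∈ U, ∀ u v : ℂ × ℂ,
      stdSymp4 (fderivWithin ℝ f U x u) (fderivWithin ℝ f U x v) = stdSymp4 u v

/-- The moment map `μ : ℂ² → ℝ²`, `μ(z) = π(|z₁|², |z₂|²)`. -/
def mu4 (z : ℂ × ℂ) : ℝ × ℝ :=
  (Real.pi * Complex.normSq z.1, Real.pi * Complex.normSq z.2)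

/-- The open Euclidean ball `B⁴(r) ⊆ ℂ²`. -/
def ball4 (r : ℝ) : Set (ℂ × ℂ) :=
  {z | Complex.normSq z.1 + Complex.normSq z.2 < r ^ 2}

/-- The open symplectic cylinder `Z⁴(r) = {z ∈ ℂ² : |z₁| < r}`. -/
def cyl4 (r : ℝ) : Set (ℂ × ℂ) :=
  {z | Complex.normSq z.1 < r ^ 2}

/-- A normalized symplectic capacity on subsets of `ℝ⁴ ≅ ℂ²`: monotone under
symplectic embeddings, conformal, and normalized on balls and cylinders. -/
def IsNormalizedCapacity4 (c : Set (ℂ × ℂ) → ℝ≥0∞) : Prop :=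
  (∀ U V : Set (ℂ × ℂ), SymplecticEmbeds4 U V → c U ≤ c V) ∧
  (∀ lam : ℝ, 0 < lam → ∀ U : Set (ℂ × ℂ),
    c (lam • U) = ENNReal.ofReal (lam ^ 2) * c U) ∧
  (∀ r : ℝ, 0 < r →
    c (ball4 r) = ENNReal.ofReal (Real.pi * r ^ 2) ∧
    c (cyl4 r) = ENNReal.ofReal (Real.pi * r ^ 2))


/-- planar area form -/
def om (u v : ℂ) : ℝ := ((starRingEnd ℂ) u * v).im

theorem om_eq (u v : ℂ) : om u v = u.re * v.im - u.im * v.re := by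
  simp [om]; ring

/-- pointwise planar symplectic -/
def SymAt (g : ℂ → ℂ) (z : ℂ) : Prop :=
  ContDiffAt ℝ (⊤ : ℕ∞) g z ∧ ∀ u v, om (fderiv ℝ g z u) (fderiv ℝ g z v) = om u v

theorem embeds_prod (U V : Set (ℂ × ℂ)) (hU : IsOpen U) (g₁ g₂ : ℂ → ℂ)
    (h₁ : ∀ z ∈ U, SymAt g₁ z.1) (h₂ : ∀ z ∈ U, SymAt g₂ z.2)
    (i₁ : ∀ z ∈ U, ∀ w ∈ U, g₁ z.1 = g₁ w.1 → z.1 = w.1)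
    (i₂ : ∀ z ∈ U, ∀ w ∈ U, g₂ z.2 = g₂ w.2 → z.2 = w.2)
    (hm : ∀ z ∈ U, (g₁ z.1, g₂ z.2) ∈ V) : SymplecticEmbeds4 U V := by
  refine ⟨fun z => (g₁ z.1, g₂ z.2), ?_, ?_, hm, ?_⟩
  · intro z hz
    exact (((h₁ z hz).1.comp z contDiffAt_fst).prodMk
      ((h₂ z hz).1.comp z contDiffAt_snd)).contDiffWithinAt
  · intro z hz w hw h
    simp only [Prod.mk.injEq] at h
    exact Prod.ext (i₁ z hz w hw h.1) (i₂ z hz w hw h.2)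
  · intro z hz u v
    rw [fderivWithin_of_isOpen hU hz]
    have d₁ := ((h₁ z hz).1.differentiableAt (by simp)).hasFDerivAt
    have d₂ := ((h₂ z hz).1.differentiableAt (by simp)).hasFDerivAt
    have D : HasFDerivAt (fun z : ℂ × ℂ => (g₁ z.1, g₂ z.2)) _ z :=
      (d₁.comp z hasFDerivAt_fst).prodMk (d₂.comp z hasFDerivAt_snd)
    rw [D.fderiv]
    have e₁ := (h₁ z hz).2 u.1 v.1
    have e₂ := (h₂ z hz).2 u.2 v.2
    simp only [om] at e₁ e₂
    simp only [stdSymp4]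
    rw [← e₁, ← e₂]
    rfl

theorem embeds_swap (U : Set (ℂ × ℂ)) (hU : IsOpen U) :
    SymplecticEmbeds4 U (Prod.swap ⁻¹' U) := by
  refine ⟨fun z => (z.2, z.1), ?_, ?_, ?_, ?_⟩
  · exact (contDiff_snd.prodMk contDiff_fst).contDiffOn
  · intro z hz w hw h
    simp only [Prod.mk.injEq] at h
    exact Prod.ext h.2 h.1
  · intro z hz; exact hz
  · intro z hz u v
    rw [fderivWithin_of_isOpen hU hz]
    have D : HasFDerivAt (fun z : ℂ × ℂ => (z.2, z.1)) _ z :=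
      (hasFDerivAt_snd (𝕜 := ℝ)).prodMk hasFDerivAt_fst
    rw [D.fderiv]
    simp [stdSymp4]; ring

theorem symAt_id (z : ℂ) : SymAt (fun z => z) z := by
  refine ⟨contDiffAt_id, fun u v => ?_⟩
  simp

theorem normSq_hasFDerivAt (z : ℂ) : HasFDerivAt (fun z : ℂ => Complex.normSq z)
    ((2 * z.re) • Complex.reCLM + (2 * z.im) • Complex.imCLM) z := by
  have h : (fun z : ℂ => Complex.normSq z) =
    fun z => Complex.reCLM z * Complex.reCLM z + Complex.imCLM z * Complex.imCLM z := by
    ext z; simp [Complex.normSq_apply]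
  rw [h]
  have D := (Complex.reCLM.hasFDerivAt.mul (Complex.reCLM.hasFDerivAt (x := z))).add
    (Complex.imCLM.hasFDerivAt.mul (Complex.imCLM.hasFDerivAt (x := z)))
  refine HasFDerivAt.congr_fderiv D ?_
  apply ContinuousLinearMap.ext
  intro u
  simp
  ring

theorem normSq_contDiff : ContDiff ℝ (⊤ : ℕ∞) (fun z : ℂ => Complex.normSq z) := by
  have h : (fun z : ℂ => Complex.normSq z) =
    fun z => Complex.reCLM z * Complex.reCLM z + Complex.imCLM z * Complex.imCLM z := by
    ext z; simp [Complex.normSq_apply]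
  rw [h]
  exact (Complex.reCLM.contDiff.mul Complex.reCLM.contDiff).add
    (Complex.imCLM.contDiff.mul Complex.imCLM.contDiff)

/-- annulus to disc -/
def annMap (k : ℝ) (z : ℂ) : ℂ :=
  (Real.sqrt (1 - k / Complex.normSq z) : ℝ) • z

theorem annMap_symAt (k : ℝ) (hk : 0 ≤ k) (z : ℂ) (hz : k < Complex.normSq z) :
    SymAt (annMap k) z := by
  have hN : 0 < Complex.normSq z := hk.trans_lt hz
  have hm : 0 < 1 - k / Complex.normSq z := by
    rw [sub_pos, div_lt_one hN]; exact hz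
  refine ⟨?_, fun u v => ?_⟩
  · exact (((contDiffAt_const (c := (1:ℝ))).sub ((contDiffAt_const (c := k)).div normSq_contDiff.contDiffAt hN.ne')).sqrt
      hm.ne').smul contDiffAt_id
  · have D1 := ((((hasFDerivAt_const (1:ℝ) z).sub (((hasDerivAt_inv hN.ne').comp_hasFDerivAt z (normSq_hasFDerivAt z)).const_mul k)).sqrt
      (by simpa [div_eq_mul_inv] using hm.ne')).smul (hasFDerivAt_id z))
    have D : HasFDerivAt (annMap k) _ z := D1
    rw [D.fderiv]
    simp only [om_eq]
    set N := Complex.normSq z with hNdef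
    have hNe : N = z.re * z.re + z.im * z.im := Complex.normSq_apply z
    have hs : Real.sqrt (1 - k * N⁻¹) ^ 2 = 1 - k * N⁻¹ :=
      Real.sq_sqrt (by simpa [div_eq_mul_inv] using hm.le)
    have hs0 : 0 < Real.sqrt (1 - k * N⁻¹) := Real.sqrt_pos.2 (by simpa [div_eq_mul_inv] using hm)
    simp only [ContinuousLinearMap.add_apply, ContinuousLinearMap.smul_apply,
      ContinuousLinearMap.smulRight_apply, ContinuousLinearMap.id_apply, Complex.add_re,
      Complex.add_im, Complex.smul_re, Complex.smul_im, ContinuousLinearMap.sub_apply,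
      ContinuousLinearMap.zero_apply, Complex.reCLM_apply, Complex.imCLM_apply, smul_eq_mul, id,
      Pi.sub_apply, Function.comp_apply, ← hNdef, ContinuousLinearMap.coe_id', id]
    generalize Real.sqrt (1 - k * N⁻¹) = m at hs hs0 ⊢
    field_simp at hs ⊢
    have : k = N - N * m^2 := by linarith
    subst this
    rw [hNe]
    ring

theorem annMap_normSq (k : ℝ) (hk : 0 ≤ k) (z : ℂ) (hz : k < Complex.normSq z) :
    Complex.normSq (annMap k z) = Complex.normSq z - k := by
  have hN : 0 < Complex.normSq z := hk.trans_lt hz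
  have hm : 0 < 1 - k / Complex.normSq z := by
    rw [sub_pos, div_lt_one hN]; exact hz
  simp only [annMap, Complex.real_smul, Complex.normSq_mul, Complex.normSq_ofReal]
  rw [Real.mul_self_sqrt hm.le]; field_simp

theorem annMap_inj (k : ℝ) (hk : 0 ≤ k) (z w : ℂ) (hz : k < Complex.normSq z)
    (hw : k < Complex.normSq w) (h : annMap k z = annMap k w) : z = w := by
  have h1 := annMap_normSq k hk z hz
  rw [h, annMap_normSq k hk w hw] at h1
  have h2 : Complex.normSq w = Complex.normSq z := by linarith
  have hN : 0 < Complex.normSq z := hk.trans_lt hz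
  have hm : 0 < 1 - k / Complex.normSq z := by
    rw [sub_pos, div_lt_one hN]; exact hz
  simp only [annMap] at h
  rw [h2] at h
  exact smul_right_injective ℂ (Real.sqrt_pos.2 hm).ne' h

theorem embeds_cyl (U : Set (ℂ × ℂ)) (hU : IsOpen U) (k r : ℝ) (hk : 0 ≤ k)
    (h : ∀ z ∈ U, k < Complex.normSq z.1 ∧ Complex.normSq z.1 < k + r ^ 2) :
    SymplecticEmbeds4 U (cyl4 r) := by
  refine embeds_prod U _ hU (annMap k) (fun z => z)
    (fun z hz => annMap_symAt k hk _ (h z hz).1) (fun z _ => symAt_id _)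
    (fun z hz w hw e => annMap_inj k hk _ _ (h z hz).1 (h w hw).1 e) (fun _ _ _ _ e => e) ?_
  intro z hz
  show Complex.normSq (annMap k z.1) < r ^ 2
  rw [annMap_normSq k hk _ (h z hz).1]
  linarith [(h z hz).2]

/-- polar lemma: `sqrt G * exp (i α)` -/
theorem polar_symAt (G α : ℂ → ℝ) (z : ℂ) (G' α' : ℂ →L[ℝ] ℝ)
    (hG : HasFDerivAt G G' z) (hα : HasFDerivAt α α' z)
    (cG : ContDiffAt ℝ (⊤ : ℕ∞) G z) (cα : ContDiffAt ℝ (⊤ : ℕ∞) α z) (hpos : 0 < G z)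
    (h : ∀ u v, G' u * α' v - α' u * G' v = 2 * om u v) :
    SymAt (fun z => ⟨Real.sqrt (G z) * Real.cos (α z), Real.sqrt (G z) * Real.sin (α z)⟩) z := by
  have e : (fun z => (⟨Real.sqrt (G z) * Real.cos (α z), Real.sqrt (G z) * Real.sin (α z)⟩ : ℂ)) =
      fun z => Complex.equivRealProdCLM.symm
        (Real.sqrt (G z) * Real.cos (α z), Real.sqrt (G z) * Real.sin (α z)) := by
    funext z
    apply Complex.ext <;> simp
  rw [e]
  refine ⟨?_, fun u v => ?_⟩
  · exact Complex.equivRealProdCLM.symm.contDiff.contDiffAt.comp z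
      (((cG.sqrt hpos.ne').mul cα.cos).prodMk ((cG.sqrt hpos.ne').mul cα.sin))
  · have D : HasFDerivAt (fun z => Complex.equivRealProdCLM.symm
        (Real.sqrt (G z) * Real.cos (α z), Real.sqrt (G z) * Real.sin (α z))) _ z :=
      Complex.equivRealProdCLM.symm.hasFDerivAt.comp z
        (((hG.sqrt hpos.ne').mul hα.cos).prodMk ((hG.sqrt hpos.ne').mul hα.sin))
    rw [D.fderiv, om_eq]
    have h1 := h u v
    have hs : Real.sqrt (G z) ^ 2 = G z := Real.sq_sqrt hpos.le
    have hs0 : 0 < Real.sqrt (G z) := Real.sqrt_pos.2 hpos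
    have hc := Real.sin_sq_add_cos_sq (α z)
    simp
    generalize Real.sqrt (G z) = m at *
    generalize Real.sin (α z) = s at *
    generalize Real.cos (α z) = c at *
    have : om u v = (G' u * α' v - α' u * G' v) / 2 * (s^2 + c^2) := by rw [hc]; linarith
    rw [this]
    field_simp
    ring

/-- `w = sqrt ((|z|²/2 + 2l)/2)` -/
def wF (l : ℝ) (z : ℂ) : ℝ := Real.sqrt (Complex.normSq z / 4 + l)
/-- `L = |z|²/2 + l` -/
def LF (l : ℝ) (z : ℂ) : ℝ := Complex.normSq z / 2 + l
/-- `sin q` -/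
def UF (l : ℝ) (z : ℂ) : ℝ := wF l z * z.im / LF l z
/-- momentum -/
def pF (l : ℝ) (z : ℂ) : ℝ := wF l z * z.re / Real.sqrt (1 - UF l z ^ 2)
/-- position -/
def qF (l : ℝ) (z : ℂ) : ℝ := Real.arcsin (UF l z)

theorem wF_pos {l : ℝ} (hl : 0 < l) (z : ℂ) : 0 < wF l z :=
  Real.sqrt_pos.2 (by have := Complex.normSq_nonneg z; positivity)
theorem wF_sq {l : ℝ} (hl : 0 < l) (z : ℂ) : wF l z ^ 2 = Complex.normSq z / 4 + l :=
  Real.sq_sqrt (by have := Complex.normSq_nonneg z; positivity)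
theorem LF_pos {l : ℝ} (hl : 0 < l) (z : ℂ) : 0 < LF l z := by
  have := Complex.normSq_nonneg z; unfold LF; positivity

/-- energy relation -/
theorem energy {l : ℝ} (hl : 0 < l) (z : ℂ) :
    LF l z ^ 2 * (1 - UF l z ^ 2) = (wF l z * z.re) ^ 2 + l ^ 2 := by
  have h1 := wF_sq hl z
  have h2 := LF_pos hl z
  have h3 : LF l z * UF l z = wF l z * z.im := by unfold UF; field_simp
  have h4 : LF l z ^ 2 * (1 - UF l z ^ 2) = LF l z ^ 2 - (wF l z * z.im) ^ 2 := by
    rw [← h3]; ring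
  rw [h4, mul_pow, mul_pow, h1]
  unfold LF
  rw [Complex.normSq_apply]; ring

theorem UF_lt {l : ℝ} (hl : 0 < l) (z : ℂ) : 0 < 1 - UF l z ^ 2 := by
  have h := energy hl z
  have h2 := LF_pos hl z
  have : 0 < LF l z ^ 2 * (1 - UF l z ^ 2) := by rw [h]; positivity
  exact pos_of_mul_pos_right this (by positivity)

/-- `p² C² + l² = L² C²`. -/
theorem energy' {l : ℝ} (hl : 0 < l) (z : ℂ) :
    LF l z ^ 2 * (1 - UF l z ^ 2) = pF l z ^ 2 * (1 - UF l z ^ 2) + l ^ 2 := by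
  have h := UF_lt hl z
  rw [energy hl z, pF, div_pow, Real.sq_sqrt h.le]; field_simp

theorem abs_pF_le {l : ℝ} (hl : 0 < l) (z : ℂ) : |pF l z| ≤ LF l z := by
  have h := UF_lt hl z
  have e := energy' hl z
  apply abs_le_of_sq_le_sq _ (LF_pos hl z).le
  have : pF l z ^ 2 * (1 - UF l z ^ 2) ≤ LF l z ^ 2 * (1 - UF l z ^ 2) := by
    rw [e]; nlinarith [sq_nonneg l]
  exact le_of_mul_le_mul_right this h

theorem pq_inj {l : ℝ} (hl : 0 < l) (z w : ℂ) (hp : pF l z = pF l w) (hU : UF l z = UF l w) :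
    z = w := by
  have h := UF_lt hl z
  have e1 := energy' hl z
  have e2 := energy' hl w
  have hL : LF l z = LF l w := by
    rw [hU, hp] at e1
    rw [hU] at h
    have : LF l z ^ 2 = LF l w ^ 2 := mul_right_cancel₀ h.ne' (e1.trans e2.symm)
    exact (sq_eq_sq₀ (LF_pos hl z).le (LF_pos hl w).le).1 this
  have hN : Complex.normSq z = Complex.normSq w := by unfold LF at hL; linarith
  have hw : wF l z = wF l w := by unfold wF; rw [hN]
  have hw0 := wF_pos hl w
  have hL0 := LF_pos hl w
  apply Complex.ext
  · unfold pF at hp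
    rw [hU, hw] at hp
    rw [hU] at h
    have := Real.sqrt_pos.2 h
    field_simp at hp
    exact hp
  · unfold UF at hU
    rw [hL, hw] at hU
    field_simp at hU
    exact hU

theorem wF_cd {l : ℝ} (hl : 0 < l) : ContDiff ℝ (⊤ : ℕ∞) (wF l) :=
  ContDiff.sqrt ((normSq_contDiff.div_const 4).add contDiff_const)
    (fun z => by have := Complex.normSq_nonneg z; positivity)
theorem LF_cd {l : ℝ} : ContDiff ℝ (⊤ : ℕ∞) (LF l) :=
  ((normSq_contDiff.div_const 2).add contDiff_const)
theorem UF_cd {l : ℝ} (hl : 0 < l) : ContDiff ℝ (⊤ : ℕ∞) (UF l) :=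
  ContDiff.div ((wF_cd hl).mul Complex.imCLM.contDiff) LF_cd (fun z => (LF_pos hl z).ne')
theorem pF_cd {l : ℝ} (hl : 0 < l) : ContDiff ℝ (⊤ : ℕ∞) (pF l) :=
  ContDiff.div ((wF_cd hl).mul Complex.reCLM.contDiff)
    (ContDiff.sqrt (contDiff_const.sub ((UF_cd hl).pow 2)) (fun z => (UF_lt hl z).ne'))
    (fun z => (Real.sqrt_pos.2 (UF_lt hl z)).ne')
theorem UF_ne {l : ℝ} (hl : 0 < l) (z : ℂ) : UF l z ≠ -1 ∧ UF l z ≠ 1 := by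
  have := UF_lt hl z
  constructor <;> intro h <;> rw [h] at this <;> norm_num at this
theorem qF_cd {l : ℝ} (hl : 0 < l) : ContDiff ℝ (⊤ : ℕ∞) (qF l) := by
  rw [contDiff_iff_contDiffAt]
  intro z
  exact (Real.contDiffAt_arcsin (UF_ne hl z).1 (UF_ne hl z).2).comp z (UF_cd hl).contDiffAt

theorem pq_deriv {l : ℝ} (hl : 0 < l) (z : ℂ) (u v : ℂ) :
    fderiv ℝ (pF l) z u * fderiv ℝ (qF l) z v - fderiv ℝ (qF l) z u * fderiv ℝ (pF l) z v
      = om u v := by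
  have hC := UF_lt hl z
  have hL0 := LF_pos hl z
  have hw0 := wF_pos hl z
  have hw2 := wF_sq hl z
  have hN0 := Complex.normSq_nonneg z
  have Dw : HasFDerivAt (wF l) ((1 / (2 * wF l z)) • ((1/4 : ℝ) •
      ((2 * z.re) • Complex.reCLM + (2 * z.im) • Complex.imCLM))) z := by
    have := (((normSq_hasFDerivAt z).const_mul (1/4 : ℝ)).add_const l).sqrt (by positivity)
    have e : wF l = fun y => Real.sqrt (1 / 4 * Complex.normSq y + l) := by
      funext y; unfold wF; congr 1; ring
    rw [e]; exact this
  have DL : HasFDerivAt (LF l) ((1/2 : ℝ) •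
      ((2 * z.re) • Complex.reCLM + (2 * z.im) • Complex.imCLM)) z := by
    have := (((normSq_hasFDerivAt z).const_mul (1/2 : ℝ)).add_const l)
    have e : LF l = fun y => 1 / 2 * Complex.normSq y + l := by
      funext y; unfold LF; ring
    rw [e]; exact this
  have DX : HasFDerivAt (fun z : ℂ => wF l z * z.re) _ z := Dw.mul Complex.reCLM.hasFDerivAt
  have DY : HasFDerivAt (fun z : ℂ => wF l z * z.im) _ z := Dw.mul Complex.imCLM.hasFDerivAt
  have DU : HasFDerivAt (UF l) _ z :=
    DY.mul ((hasDerivAt_inv hL0.ne').comp_hasFDerivAt z DL)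
  have Dq : HasFDerivAt (qF l) _ z :=
    (Real.hasDerivAt_arcsin (UF_ne hl z).1 (UF_ne hl z).2).comp_hasFDerivAt z DU
  have hS := Real.sqrt_pos.2 hC
  have DS : HasFDerivAt (fun z => Real.sqrt (1 - UF l z ^ 2)) _ z :=
    (((hasFDerivAt_const (1:ℝ) z).sub (DU.pow 2)).sqrt hC.ne')
  have Dp : HasFDerivAt (pF l) _ z :=
    DX.mul ((hasDerivAt_inv hS.ne').comp_hasFDerivAt z DS)
  rw [Dq.fderiv, Dp.fderiv, om_eq]
  have hS2 := Real.sq_sqrt hC.le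
  have hE := energy hl z
  have hLe : LF l z = (z.re * z.re + z.im * z.im) / 2 + l := by
    unfold LF; rw [Complex.normSq_apply]
  rw [Complex.normSq_apply] at hw2
  simp
  generalize Real.sqrt (1 - UF l z ^ 2) = S at *
  rw [← hS2] at hE
  generalize UF l z = U at *
  generalize wF l z = w at *
  generalize LF l z = L at *
  clear Dw DL DX DY DU Dq DS Dp
  generalize z.re = x at *
  generalize z.im = y at *
  have hK : L * (w ^ 2 + (x * x + y * y) / 4) - w ^ 2 * y ^ 2 = S ^ 2 * L ^ 2 := by
    rw [mul_comm (S ^ 2), hE, mul_pow, hw2, hLe]; ring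
  trans ((u.re * v.im - u.im * v.re) *
    (L * (w ^ 2 + (x * x + y * y) / 4) - w ^ 2 * y ^ 2)) / (S ^ 2 * L ^ 2)
  · field_simp
    ring
  · rw [hK]; field_simp


/-- the embedding of the disc in the annulus -/
def sig (l k : ℝ) (z : ℂ) : ℂ :=
  ⟨Real.sqrt (k + pF l z) * Real.cos (2 * qF l z), Real.sqrt (k + pF l z) * Real.sin (2 * qF l z)⟩

theorem sig_symAt {l : ℝ} (hl : 0 < l) (k : ℝ) (z : ℂ) (h : 0 < k + pF l z) :
    SymAt (sig l k) z := by
  have Dp := ((pF_cd hl).contDiffAt (x := z)).differentiableAt (by simp) |>.hasFDerivAt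
  have Dq := ((qF_cd hl).contDiffAt (x := z)).differentiableAt (by simp) |>.hasFDerivAt
  refine polar_symAt (fun z => k + pF l z) (fun z => 2 * qF l z) z _ _ (Dp.const_add k)
    (Dq.const_mul 2) (contDiffAt_const.add (pF_cd hl).contDiffAt)
    (contDiffAt_const.mul (qF_cd hl).contDiffAt) h ?_
  intro u v
  rw [← pq_deriv hl z u v]
  simp
  ring

theorem sig_normSq {l : ℝ} (k : ℝ) (z : ℂ) (h : 0 < k + pF l z) :
    Complex.normSq (sig l k z) = k + pF l z := by
  have h1 := Real.sin_sq_add_cos_sq (2 * qF l z)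
  have h2 := Real.sq_sqrt h.le
  simp only [sig, Complex.normSq_mk]
  linear_combination (Real.sqrt (k + pF l z)) ^ 2 * h1 + h2

theorem sig_inj {l : ℝ} (hl : 0 < l) (k : ℝ) (z w : ℂ) (h : 0 < k + pF l z)
    (h' : 0 < k + pF l w) (e : sig l k z = sig l k w) : z = w := by
  have hp : pF l z = pF l w := by
    have h1 := sig_normSq k z h
    rw [e, sig_normSq k w h'] at h1
    linarith
  refine pq_inj hl z w hp ?_
  have hs := Real.sqrt_pos.2 h'
  simp only [sig, hp, Complex.mk.injEq] at e
  have ec : Real.cos (2 * qF l z) = Real.cos (2 * qF l w) := mul_left_cancel₀ hs.ne' e.1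
  have es : Real.sin (2 * qF l z) = Real.sin (2 * qF l w) := mul_left_cancel₀ hs.ne' e.2
  have bd : ∀ z, UF l z ∈ Set.Ioo (-1 : ℝ) 1 := fun z => by
    have := UF_lt hl z
    constructor <;> nlinarith
  have sq : ∀ z, Real.sin (qF l z) = UF l z := fun z =>
    Real.sin_arcsin (bd z).1.le (bd z).2.le
  have cp : ∀ z, 0 < Real.cos (qF l z) := fun z => by
    unfold qF
    rw [Real.cos_arcsin]; exact Real.sqrt_pos.2 (UF_lt hl z)
  have c2 : Real.cos (qF l z) = Real.cos (qF l w) := by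
    rw [Real.cos_two_mul, Real.cos_two_mul] at ec
    have : Real.cos (qF l z) ^ 2 = Real.cos (qF l w) ^ 2 := by linarith
    exact (sq_eq_sq₀ (cp z).le (cp w).le).1 this
  rw [Real.sin_two_mul, Real.sin_two_mul, c2] at es
  have := mul_right_cancel₀ (cp w).ne' es
  rw [← sq z, ← sq w]; linarith

/-- the ball embeds -/
theorem embeds_ball (W : Set (ℝ × ℝ)) (v : ℝ × ℝ) (m r : ℝ)
    (hm : Real.pi * r ^ 2 < 2 * m)
    (hW : ∀ x : ℝ × ℝ, |x.1| + |x.2| < m → x ∈ W)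
    (hv : ∀ x ∈ W, 0 < (x : ℝ × ℝ).1 + v.1 ∧ 0 < x.2 + v.2) :
    SymplecticEmbeds4 (ball4 r) (mu4 ⁻¹' ((fun x : ℝ × ℝ => x + v) '' W)) := by
  have hπ := Real.pi_pos
  obtain ⟨l, hl, hlm⟩ : ∃ l : ℝ, 0 < l ∧ Real.pi * r ^ 2 / 2 + 2 * Real.pi * l ≤ m := by
    refine ⟨(m - Real.pi * r ^ 2 / 2) / (2 * Real.pi), by apply div_pos <;> linarith, ?_⟩
    field_simp; linarith
  have hU : IsOpen (ball4 r) := by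
    apply isOpen_lt _ continuous_const
    exact (normSq_contDiff.continuous.comp continuous_fst).add
      (normSq_contDiff.continuous.comp continuous_snd)
  have key : ∀ z ∈ ball4 r, (Real.pi * pF l z.1, Real.pi * pF l z.2) ∈ W := by
    intro z hz
    apply hW
    have h1 := abs_pF_le hl z.1
    have h2 := abs_pF_le hl z.2
    have h3 : Complex.normSq z.1 + Complex.normSq z.2 < r ^ 2 := hz
    simp only [abs_mul, abs_of_pos hπ]
    unfold LF at h1 h2
    have : |pF l z.1| + |pF l z.2| < r ^ 2 / 2 + 2 * l := by linarith
    have := mul_lt_mul_of_pos_left this hπ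
    linarith
  have pos1 : ∀ z ∈ ball4 r, 0 < v.1 / Real.pi + pF l z.1 := by
    intro z hz
    have := (hv _ (key z hz)).1
    simp only at this
    have e : v.1 / Real.pi + pF l z.1 = (Real.pi * pF l z.1 + v.1) / Real.pi := by
      field_simp; ring
    rw [e]; positivity
  have pos2 : ∀ z ∈ ball4 r, 0 < v.2 / Real.pi + pF l z.2 := by
    intro z hz
    have := (hv _ (key z hz)).2
    simp only at this
    have e : v.2 / Real.pi + pF l z.2 = (Real.pi * pF l z.2 + v.2) / Real.pi := by
      field_simp; ring
    rw [e]; positivity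
  refine embeds_prod _ _ hU (sig l (v.1 / Real.pi)) (sig l (v.2 / Real.pi))
    (fun z hz => sig_symAt hl _ _ (pos1 z hz)) (fun z hz => sig_symAt hl _ _ (pos2 z hz))
    (fun z hz w hw e => sig_inj hl _ _ _ (pos1 z hz) (pos1 w hw) e)
    (fun z hz w hw e => sig_inj hl _ _ _ (pos2 z hz) (pos2 w hw) e) ?_
  intro z hz
  refine ⟨_, key z hz, ?_⟩
  simp only [mu4, sig_normSq _ _ (pos1 z hz), sig_normSq _ _ (pos2 z hz)]
  ext
  · simp; field_simp; ring
  · simp; field_simp; ring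
/-- Let `A ⊂ ℝ²` be compact convex with nonempty interior, symmetric w.r.t. both
coordinate axes, and let `a` (resp. `b`) be the largest `x` with `(x,0) ∈ A` (resp.
largest `y` with `(0,y) ∈ A`).  Then the minimum over `m ∈ ℤ² ∖ {0}` of the support
function `sup_{x∈A} ⟨m,x⟩` is attained and equals `min a b`, and for every translate
of `interior A` into the open positive quadrant, every normalized symplectic capacity
of `μ⁻¹(interior A + v)` equals `2·min(a,b)`. -/
theorem capacity_axis_symmetric_codisc
    (A : Set (ℝ × ℝ)) (hAcomp : IsCompact A) (hAconv : Convex ℝ A)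
    (hAint : (interior A).Nonempty)
    (hsymx : ∀ x ∈ A, (-(x : ℝ × ℝ).1, x.2) ∈ A)
    (hsymy : ∀ x ∈ A, ((x : ℝ × ℝ).1, -x.2) ∈ A)
    (a b : ℝ)
    (ha : IsGreatest {x : ℝ | ((x, 0) : ℝ × ℝ) ∈ A} a)
    (hb : IsGreatest {y : ℝ | ((0, y) : ℝ × ℝ) ∈ A} b) :
    IsLeast
      {t : ℝ | ∃ m : ℤ × ℤ, m ≠ 0 ∧
        t = sSup ((fun x : ℝ × ℝ => (m.1 : ℝ) * x.1 + (m.2 : ℝ) * x.2) '' A)}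
      (min a b) ∧
    ∀ v : ℝ × ℝ, (∀ x ∈ interior A, 0 < (x : ℝ × ℝ).1 + v.1 ∧ 0 < x.2 + v.2) →
      ∀ c : Set (ℂ × ℂ) → ℝ≥0∞, IsNormalizedCapacity4 c →
        c (mu4 ⁻¹' ((fun x : ℝ × ℝ => x + v) '' interior A)) =
          ENNReal.ofReal (2 * min a b) := by
  -- basic geometry of `A`
  have hx0 : ∀ x ∈ A, ((x.1, 0) : ℝ × ℝ) ∈ A := by
    intro x hx
    have := hAconv hx (hsymy x hx) (a := 1/2) (b := 1/2) (by norm_num) (by norm_num) (by norm_num)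
    convert this using 1
    ext <;> simp; ring
  have hy0 : ∀ x ∈ A, ((0, x.2) : ℝ × ℝ) ∈ A := by
    intro x hx
    have := hAconv hx (hsymx x hx) (a := 1/2) (b := 1/2) (by norm_num) (by norm_num) (by norm_num)
    convert this using 1
    ext <;> simp; ring
  have habs1 : ∀ x ∈ A, |x.1| ≤ a := by
    intro x hx
    rw [abs_le]
    have h1 := ha.2 (hx0 x hx)
    have h2 := ha.2 (hx0 _ (hsymx x hx))
    simp only at h1 h2
    constructor <;> linarith
  have habs2 : ∀ x ∈ A, |x.2| ≤ b := by
    intro x hx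
    rw [abs_le]
    have h1 := hb.2 (hy0 x hx)
    have h2 := hb.2 (hy0 _ (hsymy x hx))
    simp only at h1 h2
    constructor <;> linarith
  have hsub1 : ∀ x ∈ interior A, -a < x.1 ∧ x.1 < a := by
    intro x hx
    have : A ⊆ Set.Icc (-a) a ×ˢ Set.univ := fun y hy => ⟨abs_le.1 (habs1 y hy), trivial⟩
    have h := interior_mono this hx
    rw [interior_prod_eq, interior_Icc] at h
    exact h.1
  have hsub2 : ∀ x ∈ interior A, -b < x.2 ∧ x.2 < b := by
    intro x hx
    have : A ⊆ Set.univ ×ˢ Set.Icc (-b) b := fun y hy => ⟨trivial, abs_le.1 (habs2 y hy)⟩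
    have h := interior_mono this hx
    rw [interior_prod_eq, interior_Icc] at h
    exact h.2
  have ha0 : 0 < a := by
    obtain ⟨x, hx⟩ := hAint
    linarith [(hsub1 x hx).1, (hsub1 x hx).2]
  have hb0 : 0 < b := by
    obtain ⟨x, hx⟩ := hAint
    linarith [(hsub2 x hx).1, (hsub2 x hx).2]
  have haA : ((a, 0) : ℝ × ℝ) ∈ A := ha.1
  have hbA : ((0, b) : ℝ × ℝ) ∈ A := hb.1
  have h0A : ((0, 0) : ℝ × ℝ) ∈ A := hy0 _ haA
  have hpos : ∀ x y : ℝ, 0 ≤ x → 0 ≤ y → x < a → x / a + y / b ≤ 1 → (x, y) ∈ A := by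
    intro x y hx hy hxa h
    have ht : 0 < 1 - x / a := by rw [sub_pos, div_lt_one ha0]; exact hxa
    have hs : y / b / (1 - x / a) ≤ 1 := by rw [div_le_one ht]; linarith
    have h1 : ((0, y / (1 - x / a)) : ℝ × ℝ) ∈ A := by
      have := hAconv hbA h0A (a := y / b / (1 - x / a)) (b := 1 - y / b / (1 - x / a))
        (by positivity) (by linarith) (by ring)
      convert this using 1
      ext <;> simp
      field_simp
    have := hAconv haA h1 (a := x / a) (b := 1 - x / a) (by positivity) ht.le (by ring)
    convert this using 1
    ext <;> simp
    · field_simp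
    · exact (mul_div_cancel₀ y ht.ne').symm
  have hdia : ∀ x : ℝ × ℝ, |x.1| + |x.2| < min a b → x ∈ A := by
    intro x hx
    have h1 : (|x.1|, |x.2|) ∈ A := by
      have hm : 0 < min a b := lt_min ha0 hb0
      have e1 : |x.1| / a ≤ |x.1| / min a b :=
        div_le_div_of_nonneg_left (abs_nonneg _) hm (min_le_left _ _)
      have e2 : |x.2| / b ≤ |x.2| / min a b :=
        div_le_div_of_nonneg_left (abs_nonneg _) hm (min_le_right _ _)
      have e3 : |x.1| / min a b + |x.2| / min a b ≤ 1 := by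
        rw [← add_div, div_le_one hm]; exact hx.le
      exact hpos _ _ (abs_nonneg _) (abs_nonneg _)
        (by linarith [abs_nonneg x.2, min_le_left a b]) (by linarith)
    have h2 : (x.1, |x.2|) ∈ A := by
      rcases abs_choice x.1 with h | h
      · rw [h] at h1; exact h1
      · have := hsymx _ h1
        simp only [h, neg_neg] at this
        exact this
    rcases abs_choice x.2 with h | h
    · rw [h] at h2; exact h2
    · have := hsymy _ h2
      simp only [h, neg_neg] at this
      exact this
  have hdiaI : ∀ x : ℝ × ℝ, |x.1| + |x.2| < min a b → x ∈ interior A := by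
    intro x hx
    have ho : IsOpen {x : ℝ × ℝ | |x.1| + |x.2| < min a b} :=
      isOpen_lt (by fun_prop) continuous_const
    exact interior_maximal (fun y hy => hdia y hy) ho hx
  constructor
  · -- the systole
    have hbdd : ∀ m : ℤ × ℤ, BddAbove
        ((fun x : ℝ × ℝ => (m.1 : ℝ) * x.1 + (m.2 : ℝ) * x.2) '' A) := fun m =>
      (hAcomp.image (by fun_prop)).bddAbove
    constructor
    · rcases le_total a b with h | h
      · refine ⟨(1, 0), by simp, ?_⟩
        rw [min_eq_left h]
        symm
        apply IsGreatest.csSup_eq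
        refine ⟨⟨_, haA, by simp⟩, ?_⟩
        rintro _ ⟨x, hx, rfl⟩
        simpa using (abs_le.1 (habs1 x hx)).2
      · refine ⟨(0, 1), by simp, ?_⟩
        rw [min_eq_right h]
        symm
        apply IsGreatest.csSup_eq
        refine ⟨⟨_, hbA, by simp⟩, ?_⟩
        rintro _ ⟨x, hx, rfl⟩
        simpa using (abs_le.1 (habs2 x hx)).2
    · rintro t ⟨m, hm, rfl⟩
      have hone : ∀ n : ℤ, n ≠ 0 → (1 : ℝ) ≤ |(n : ℝ)| := by
        intro n hn
        exact_mod_cast Int.one_le_abs hn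
      by_cases h1 : m.1 = 0
      · have h2 : m.2 ≠ 0 := fun h => hm (Prod.ext h1 h)
        refine (min_le_right a b).trans ?_
        have hh : b ≤ |(m.2 : ℝ)| * b := by nlinarith [hone _ h2]
        refine hh.trans ?_
        rcases abs_choice (m.2 : ℝ) with h | h <;> rw [h]
        · exact le_csSup (hbdd m) ⟨_, hbA, by simp⟩
        · exact le_csSup (hbdd m) ⟨_, hsymy _ hbA, by simp⟩
      · refine (min_le_left a b).trans ?_
        have hh : a ≤ |(m.1 : ℝ)| * a := by nlinarith [hone _ h1]
        refine hh.trans ?_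
        rcases abs_choice (m.1 : ℝ) with h | h <;> rw [h]
        · exact le_csSup (hbdd m) ⟨_, haA, by simp⟩
        · exact le_csSup (hbdd m) ⟨_, hsymx _ haA, by simp⟩
  · intro v hv c hc
    obtain ⟨hmono, -, hnorm⟩ := hc
    have hπ := Real.pi_pos
    have hm0 : 0 < min a b := lt_min ha0 hb0
    have hmuc : Continuous mu4 :=
      (continuous_const.mul (normSq_contDiff.continuous.comp continuous_fst)).prodMk
        (continuous_const.mul (normSq_contDiff.continuous.comp continuous_snd))
    have hUo : IsOpen (mu4 ⁻¹' ((fun x : ℝ × ℝ => x + v) '' interior A)) :=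
      ((isOpenMap_add_right v) _ isOpen_interior).preimage hmuc
    set U := mu4 ⁻¹' ((fun x : ℝ × ℝ => x + v) '' interior A) with hUdef
    have hr2 : Real.sqrt (2 * min a b / Real.pi) ^ 2 = 2 * min a b / Real.pi :=
      Real.sq_sqrt (by positivity)
    have hcyl : c (cyl4 (Real.sqrt (2 * min a b / Real.pi))) = ENNReal.ofReal (2 * min a b) := by
      rw [(hnorm _ (Real.sqrt_pos.2 (by positivity))).2, hr2]
      congr 1; field_simp
    have hv1 : min a b ≤ v.1 := by
      refine le_of_forall_lt fun t ht => ?_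
      rcases le_or_gt t 0 with h | h
      · have := (hv (0, 0) (hdiaI _ (by simpa using hm0))).1
        simp only at this; linarith
      · have := (hv (-t, 0) (hdiaI _ (by simp only [abs_neg, abs_zero, abs_of_pos h]; linarith))).1
        simp only at this; linarith
    have hv2 : min a b ≤ v.2 := by
      refine le_of_forall_lt fun t ht => ?_
      rcases le_or_gt t 0 with h | h
      · have := (hv (0, 0) (hdiaI _ (by simpa using hm0))).2
        simp only at this; linarith
      · have := (hv (0, -t) (hdiaI _ (by simp only [abs_neg, abs_zero, abs_of_pos h]; linarith))).2
        simp only at this; linarith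
    apply le_antisymm
    · rw [← hcyl]
      rcases le_total a b with h | h
      · rw [min_eq_left h] at *
        refine hmono _ _ (embeds_cyl U hUo ((v.1 - a) / Real.pi) _
          (div_nonneg (by linarith) hπ.le) ?_)
        rintro z ⟨x, hx, hxz⟩
        have h1 : x.1 + v.1 = Real.pi * Complex.normSq z.1 := congrArg Prod.fst hxz
        have h2 := hsub1 x hx
        rw [hr2, ← add_div, div_lt_iff₀ hπ, lt_div_iff₀ hπ]
        constructor <;> linarith
      · rw [min_eq_right h] at *
        refine (hmono _ _ (embeds_swap U hUo)).trans (hmono _ _ (embeds_cyl _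
          (hUo.preimage continuous_swap) ((v.2 - b) / Real.pi) _
          (div_nonneg (by linarith) hπ.le) ?_))
        rintro z ⟨x, hx, hxz⟩
        have h1 : x.2 + v.2 = Real.pi * Complex.normSq z.1 := congrArg Prod.snd hxz
        have h2 := hsub2 x hx
        rw [hr2, ← add_div, div_lt_iff₀ hπ, lt_div_iff₀ hπ]
        constructor <;> linarith
    · refine le_of_forall_lt fun d hd => ?_
      obtain ⟨t, ht1, ht2⟩ := exists_between hd
      have htop : t ≠ ⊤ := ne_top_of_lt ht2
      have ht0 : 0 < t.toReal := ENNReal.toReal_pos (ne_bot_of_gt ht1) htop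
      have ht3 : t.toReal < 2 * min a b := (ENNReal.lt_ofReal_iff_toReal_lt htop).1 ht2
      have hs2 : Real.sqrt (t.toReal / Real.pi) ^ 2 = t.toReal / Real.pi :=
        Real.sq_sqrt (by positivity)
      have hs3 : Real.pi * Real.sqrt (t.toReal / Real.pi) ^ 2 = t.toReal := by
        rw [hs2]; field_simp
      have hb' := (hnorm (Real.sqrt (t.toReal / Real.pi)) (Real.sqrt_pos.2 (by positivity))).1
      rw [hs3, ENNReal.ofReal_toReal htop] at hb'
      refine ht1.trans_le ?_
      rw [← hb']
      exact hmono _ _ (embeds_ball (interior A) v (min a b) _ (by rw [hs3]; exact ht3) hdiaI hv)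
end
end

section
/- Let Q = conv{(1,0),(2,1),(1,2),(0,1)} ⊂ ℝ²_{≥0} (the translate by (1,1) of the ℓ¹ unit ball of ℝ²). Then there exists a symplectic embedding of the open ball B⁴(√(2/π)) (which has Gromov area πr² = 2) into X_{int(Q)} = μ⁻¹(interior(Q)); in particular the Gromov width of X_{int(Q)} is at least 2. -/
open Set
open scoped Pointwise ENNReal

noncomputable section

/-- The Gromov width of `U ⊆ ℝ⁴`:
`c_Gr(U) = sup { πr² : B⁴(r) symplectically embeds into U }`. -/
def gromovWidth4 (U : Set (ℂ × ℂ)) : ℝ :=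
  sSup {t : ℝ | ∃ r : ℝ, 0 < r ∧ t = Real.pi * r ^ 2 ∧ SymplecticEmbeds4 (ball4 r) U}

open scoped ContDiff

abbrev E2 := ℝ × ℝ
abbrev E4 := E2 × E2

def w2 (u v : E2) : ℝ := u.1 * v.2 - u.2 * v.1
def w4 (u v : E4) : ℝ := w2 u.1 v.1 + w2 u.2 v.2

/-- Smooth injective symplectic map on a set (dimension four). -/
def Sy (f : E4 → E4) (U : Set E4) : Prop :=
  InjOn f U ∧ ∀ x ∈ U, ContDiffAt ℝ ∞ f x ∧
    ∀ u v, w4 (fderiv ℝ f x u) (fderiv ℝ f x v) = w4 u v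

/-- Smooth injective area preserving map on a set (dimension two). -/
def Ar (f : E2 → E2) (U : Set E2) : Prop :=
  InjOn f U ∧ ∀ x ∈ U, ContDiffAt ℝ ∞ f x ∧
    ∀ u v, w2 (fderiv ℝ f x u) (fderiv ℝ f x v) = w2 u v

lemma Sy.comp {f g : E4 → E4} {U V : Set E4} (hg : Sy g V) (hf : Sy f U)
    (h : MapsTo f U V) : Sy (g ∘ f) U := by
  refine ⟨hg.1.comp hf.1 h, fun x hx => ?_⟩
  obtain ⟨h1, h2⟩ := hf.2 x hx
  obtain ⟨h3, h4⟩ := hg.2 (f x) (h hx)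
  refine ⟨h3.comp x h1, fun u v => ?_⟩
  rw [fderiv_comp x (h3.differentiableAt (by simp)) (h1.differentiableAt (by simp))]
  simp [h4, h2]

lemma Ar.comp {f g : E2 → E2} {U V : Set E2} (hg : Ar g V) (hf : Ar f U)
    (h : MapsTo f U V) : Ar (g ∘ f) U := by
  refine ⟨hg.1.comp hf.1 h, fun x hx => ?_⟩
  obtain ⟨h1, h2⟩ := hf.2 x hx
  obtain ⟨h3, h4⟩ := hg.2 (f x) (h hx)
  refine ⟨h3.comp x h1, fun u v => ?_⟩
  rw [fderiv_comp x (h3.differentiableAt (by simp)) (h1.differentiableAt (by simp))]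
  simp [h4, h2]

lemma Sy.mono {f : E4 → E4} {U V : Set E4} (hf : Sy f U) (h : V ⊆ U) : Sy f V :=
  ⟨hf.1.mono h, fun x hx => hf.2 x (h hx)⟩

lemma Ar.mono {f : E2 → E2} {U V : Set E2} (hf : Ar f U) (h : V ⊆ U) : Ar f V :=
  ⟨hf.1.mono h, fun x hx => hf.2 x (h hx)⟩

lemma Ar.prod {f g : E2 → E2} {U V : Set E2} (hf : Ar f U) (hg : Ar g V) :
    Sy (Prod.map f g) (U ×ˢ V) := by
  refine ⟨hf.1.prodMap hg.1, fun x hx => ?_⟩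
  obtain ⟨h1, h2⟩ := hf.2 x.1 hx.1
  obtain ⟨h3, h4⟩ := hg.2 x.2 hx.2
  refine ⟨ContDiffAt.prodMap' h1 h3, fun u v => ?_⟩
  have hd := HasFDerivAt.prodMap x (h1.differentiableAt (by simp)).hasFDerivAt
    (h3.differentiableAt (by simp)).hasFDerivAt
  rw [hd.fderiv]
  simp [w4, h2, h4]

lemma Ar_id (U : Set E2) : Ar id U :=
  ⟨injOn_id _, fun x _ => ⟨contDiffAt_id, fun u v => by simp⟩⟩

lemma Sy_swap (U : Set E4) : Sy Prod.swap U := by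
  refine ⟨Prod.swap_injective.injOn, fun x _ => ⟨?_, fun u v => ?_⟩⟩
  · exact contDiffAt_snd.prodMk contDiffAt_fst
  · have : HasFDerivAt (Prod.swap : E4 → E4)
      ((ContinuousLinearMap.snd ℝ E2 E2).prod (ContinuousLinearMap.fst ℝ E2 E2)) x :=
      hasFDerivAt_snd.prodMk hasFDerivAt_fst
    rw [this.fderiv]
    simp [w4]; ring

/-- squared norm -/
def N2 (z : E2) : ℝ := z.1 ^ 2 + z.2 ^ 2

/-- rotation -/
def rot (η : ℝ) (z : E2) : E2 :=
  (z.1 * Real.cos η - z.2 * Real.sin η, z.1 * Real.sin η + z.2 * Real.cos η)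

lemma N2_rot (η : ℝ) (z : E2) : N2 (rot η z) = N2 z := by
  simp only [N2, rot]
  linear_combination (z.1 ^ 2 + z.2 ^ 2) * Real.sin_sq_add_cos_sq η

lemma rot_inj (η : ℝ) {z w : E2} (h : rot η z = rot η w) : z = w := by
  simp only [rot, Prod.mk.injEq] at h
  obtain ⟨h1, h2⟩ := h
  have e := Real.sin_sq_add_cos_sq η
  ext
  · linear_combination Real.cos η * h1 + Real.sin η * h2 - (z.1 - w.1) * e
  · linear_combination -Real.sin η * h1 + Real.cos η * h2 - (z.2 - w.2) * e

def ph (a b c N : ℝ) : ℝ := a + b * N + c * N ^ 2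

/-- The twist map. -/
def Tw (a b c : ℝ) (z : E4) : E4 :=
  (rot (z.2.1 * z.2.2 * (b + 2 * c * N2 z.1) / ph a b c (N2 z.1)) z.1,
   (z.2.1 / Real.sqrt (ph a b c (N2 z.1)), z.2.2 * Real.sqrt (ph a b c (N2 z.1))))

lemma Tw_inj (a b c : ℝ) : InjOn (Tw a b c) {z | 0 < ph a b c (N2 z.1)} := by
  intro z hz w hw h
  have hN : N2 z.1 = N2 w.1 := by
    have := congrArg (fun t => N2 t.1) h
    simpa [Tw, N2_rot] using this
  simp only [Tw, Prod.mk.injEq, hN] at h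
  obtain ⟨h1, h2, h3⟩ := h
  have hp : 0 < Real.sqrt (ph a b c (N2 w.1)) := Real.sqrt_pos.2 hw
  have e1 : z.2.1 = w.2.1 := by
    field_simp at h2; exact h2
  have e2 : z.2.2 = w.2.2 := mul_right_cancel₀ hp.ne' h3
  rw [e1, e2] at h1
  exact Prod.ext (rot_inj _ h1) (Prod.ext e1 e2)

lemma Tw_smooth (a b c : ℝ) (z : E4) (hz : 0 < ph a b c (N2 z.1)) :
    ContDiffAt ℝ ∞ (Tw a b c) z := by
  have h1 : ContDiffAt ℝ ∞ (fun z : E4 => ph a b c (N2 z.1)) z := by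
    unfold ph N2; fun_prop
  have h2 := h1.sqrt hz.ne'
  have h3 : ContDiffAt ℝ ∞ (fun z : E4 =>
    z.2.1 * z.2.2 * (b + 2 * c * N2 z.1) / ph a b c (N2 z.1)) z := by
    refine ContDiffAt.div ?_ h1 hz.ne'
    unfold N2; fun_prop
  have h4 := h3.sin
  have h5 := h3.cos
  have hs := Real.sqrt_pos.2 hz
  have h6 : ContDiffAt ℝ ∞ (fun z : E4 => z.2.1 / Real.sqrt (ph a b c (N2 z.1))) z :=
    ContDiffAt.div (by fun_prop) h2 hs.ne'
  unfold Tw rot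
  refine ContDiffAt.prodMk (ContDiffAt.prodMk ?_ ?_) (ContDiffAt.prodMk h6 ?_) <;> fun_prop

lemma rot_fderiv {F : Type*} [NormedAddCommGroup F] [NormedSpace ℝ F] {η X Y : F → ℝ}
    {η' X' Y' : F →L[ℝ] ℝ} {x : F} (hη : HasFDerivAt η η' x) (hX : HasFDerivAt X X' x)
    (hY : HasFDerivAt Y Y' x) :
    ∃ L : F →L[ℝ] E2, HasFDerivAt (fun z => rot (η z) (X z, Y z)) L x ∧
      ∀ u v, w2 (L u) (L v) = w2 (X' u, Y' u) (X' v, Y' v)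
        + ((X x * X' u + Y x * Y' u) * η' v - (X x * X' v + Y x * Y' v) * η' u) := by
  refine ⟨_, ((hX.mul hη.cos).sub (hY.mul hη.sin)).prodMk ((hX.mul hη.sin).add (hY.mul hη.cos)), ?_⟩
  intro u v
  simp [w2]
  have e := Real.sin_sq_add_cos_sq (η x)
  generalize Real.sin (η x) = s at *
  generalize Real.cos (η x) = k at *
  linear_combination (X' u * Y' v - Y' u * X' v + (X x * X' u + Y x * Y' u) * η' v - (X x * X' v + Y x * Y' v) * η' u) * e

lemma scale_fderiv {F : Type*} [NormedAddCommGroup F] [NormedSpace ℝ F] {S X Y : F → ℝ}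
    {S' X' Y' : F →L[ℝ] ℝ} {x : F} (hS : HasFDerivAt S S' x) (hX : HasFDerivAt X X' x)
    (hY : HasFDerivAt Y Y' x) (h0 : 0 < S x) :
    ∃ L : F →L[ℝ] E2, HasFDerivAt (fun z => (X z / Real.sqrt (S z), Y z * Real.sqrt (S z))) L x ∧
      ∀ u v, w2 (L u) (L v) = w2 (X' u, Y' u) (X' v, Y' v)
        + ((X x * Y' u + Y x * X' u) * S' v - (X x * Y' v + Y x * X' v) * S' u) / (2 * S x) := by
  have hs := Real.sqrt_pos.2 h0
  have h1 := hS.sqrt h0.ne'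
  have h2 := hX.mul ((hasDerivAt_inv hs.ne').comp_hasFDerivAt x h1)
  refine ⟨_, (h2.prodMk (hY.mul h1)).congr_of_eventuallyEq ?_, ?_⟩
  · filter_upwards with z
    simp [div_eq_mul_inv]
  intro u v
  simp [w2]
  have e := Real.sq_sqrt h0.le
  generalize Real.sqrt (S x) = s at *
  rw [← e]
  field_simp
  ring

lemma ph_fderiv {F : Type*} [NormedAddCommGroup F] [NormedSpace ℝ F] (a b c : ℝ) {X Y : F → ℝ}
    {X' Y' : F →L[ℝ] ℝ} {x : F} (hX : HasFDerivAt X X' x)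
    (hY : HasFDerivAt Y Y' x) :
    ∃ L : F →L[ℝ] ℝ, HasFDerivAt (fun z => ph a b c (N2 (X z, Y z))) L x ∧
      ∀ u, L u = (b + 2 * c * N2 (X x, Y x)) * (2 * (X x * X' u + Y x * Y' u)) := by
  have hN := (hX.pow 2).add (hY.pow 2)
  refine ⟨_, ((hN.const_mul b).const_add a).add ((hN.pow 2).const_mul c) , ?_⟩
  intro u
  simp [N2]
  ring

lemma Tw_Sy (a b c : ℝ) : Sy (Tw a b c) {z | 0 < ph a b c (N2 z.1)} := by
  refine ⟨Tw_inj a b c, fun z hz => ⟨Tw_smooth a b c z hz, fun u v => ?_⟩⟩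
  have hz : 0 < ph a b c (N2 z.1) := hz
  have hX : HasFDerivAt (fun z : E4 => z.1.1) ((ContinuousLinearMap.fst ℝ ℝ ℝ).comp
    (ContinuousLinearMap.fst ℝ E2 E2)) z :=
    ((ContinuousLinearMap.fst ℝ ℝ ℝ).comp
    (ContinuousLinearMap.fst ℝ E2 E2)).hasFDerivAt
  have hY : HasFDerivAt (fun z : E4 => z.1.2) ((ContinuousLinearMap.snd ℝ ℝ ℝ).comp
    (ContinuousLinearMap.fst ℝ E2 E2)) z :=
    ((ContinuousLinearMap.snd ℝ ℝ ℝ).comp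
    (ContinuousLinearMap.fst ℝ E2 E2)).hasFDerivAt
  have hx : HasFDerivAt (fun z : E4 => z.2.1) ((ContinuousLinearMap.fst ℝ ℝ ℝ).comp
    (ContinuousLinearMap.snd ℝ E2 E2)) z :=
    ((ContinuousLinearMap.fst ℝ ℝ ℝ).comp
    (ContinuousLinearMap.snd ℝ E2 E2)).hasFDerivAt
  have hy : HasFDerivAt (fun z : E4 => z.2.2) ((ContinuousLinearMap.snd ℝ ℝ ℝ).comp
    (ContinuousLinearMap.snd ℝ E2 E2)) z :=
    ((ContinuousLinearMap.snd ℝ ℝ ℝ).comp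
    (ContinuousLinearMap.snd ℝ E2 E2)).hasFDerivAt
  obtain ⟨S', hS, eS⟩ := ph_fderiv a b c hX hY
  obtain ⟨M', hM, eM⟩ := ph_fderiv b (2 * c) 0 hX hY
  have hη := ((hx.mul hy).mul hM).mul ((hasDerivAt_inv hz.ne').comp_hasFDerivAt z hS)
  obtain ⟨L1, hL1, e1⟩ := rot_fderiv hη hX hY
  obtain ⟨L2, hL2, e2⟩ := scale_fderiv hS hx hy hz
  have hf : HasFDerivAt (Tw a b c) (L1.prod L2) z := by
    refine (hL1.prodMk hL2).congr_of_eventuallyEq ?_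
    filter_upwards with z
    simp [Tw, ph, div_eq_mul_inv]
  rw [hf.fderiv]
  have h0 := hz.ne'
  simp only [w4, ContinuousLinearMap.prod_apply, e1, e2]
  simp [w2, eS, eM]
  simp only [show ph b (2 * c) 0 (N2 z.1) = b + 2 * c * N2 z.1 by simp [ph]]
  generalize ph a b c (N2 z.1) = S at *
  generalize N2 z.1 = N at *
  field_simp
  ring

def Xi (t : ℝ) : ℝ := 1 / 2 + (t * Real.sqrt (1 - t ^ 2) + Real.arcsin t) / Real.pi

lemma Xi_deriv {t : ℝ} (ht : t ^ 2 < 1) :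
    HasDerivAt Xi (2 / Real.pi * Real.sqrt (1 - t ^ 2)) t := by
  have h0 : 0 < 1 - t ^ 2 := by linarith
  have hs := Real.sqrt_pos.2 h0
  have h1 : HasDerivAt (fun t : ℝ => 1 - t ^ 2) (-(2 * t)) t := by
    simpa using ((hasDerivAt_id t).pow 2).const_sub 1
  have h2 := h1.sqrt h0.ne'
  have h3 := Real.hasDerivAt_arcsin (x := t) (by rintro rfl; norm_num at ht) (by rintro rfl; norm_num at ht)
  have h4 := ((((hasDerivAt_id t).mul h2).add h3).div_const Real.pi).const_add (1 / 2)
  refine h4.congr_deriv ?_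
  have e := Real.sq_sqrt h0.le
  have := Real.pi_pos
  simp
  generalize Real.sqrt (1 - t ^ 2) = s at *
  field_simp
  linear_combination -e

lemma Xi_smooth {t : ℝ} (ht : t ^ 2 < 1) : ContDiffAt ℝ ∞ Xi t := by
  have h3 := Real.contDiffAt_arcsin (n := ∞) (x := t) (by rintro rfl; norm_num at ht) (by rintro rfl; norm_num at ht)
  have h2 : ContDiffAt ℝ ∞ (fun t : ℝ => Real.sqrt (1 - t ^ 2)) t :=
    ContDiffAt.sqrt (by fun_prop) (by linarith)
  unfold Xi
  fun_prop

lemma Xi_mono : StrictMonoOn Xi (Icc (-1) 1) := by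
  refine strictMonoOn_of_deriv_pos (convex_Icc _ _) ?_ ?_
  · unfold Xi
    have := Real.continuous_arcsin
    fun_prop
  · intro x hx
    rw [interior_Icc] at hx
    have hx2 : x ^ 2 < 1 := by nlinarith [hx.1, hx.2]
    rw [(Xi_deriv hx2).deriv]
    have := Real.sqrt_pos.2 (show 0 < 1 - x ^ 2 by linarith)
    have := Real.pi_pos
    positivity

lemma Xi_range {t : ℝ} (ht : t ^ 2 < 1) : 0 < Xi t ∧ Xi t < 1 := by
  have h1 : -1 < t := by nlinarith
  have h2 : t < 1 := by nlinarith
  have hp := Real.pi_pos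
  have a := Xi_mono (by simp) (show t ∈ Icc (-1 : ℝ) 1 from ⟨h1.le, h2.le⟩) h1
  have b := Xi_mono (show t ∈ Icc (-1 : ℝ) 1 from ⟨h1.le, h2.le⟩) (by simp) h2
  have e1 : Xi (-1) = 0 := by
    simp [Xi]; field_simp; norm_num
  have e2 : Xi 1 = 1 := by
    simp [Xi]; field_simp; norm_num
  rw [e1] at a; rw [e2] at b
  exact ⟨a, b⟩

/-- momentum coordinate -/
def pp (z : E2) : ℝ := -(Real.pi / 2) * z.2 / Real.sqrt (1 - z.1 ^ 2)

def VM : Set E2 := {z | z.1 ^ 2 < 1 ∧ |pp z| < 1}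

lemma pp_lt {z : E2} {k : ℝ} (hk : 0 < k)
    (h : z.1 ^ 2 + (Real.pi / 2) ^ 2 * z.2 ^ 2 / k ^ 2 < 1) : z.1 ^ 2 < 1 ∧ |pp z| < k := by
  have h0 : 0 ≤ (Real.pi / 2) ^ 2 * z.2 ^ 2 / k ^ 2 := by positivity
  have h1 : 0 < 1 - z.1 ^ 2 := by linarith
  refine ⟨by linarith, ?_⟩
  apply abs_lt_of_sq_lt_sq _ hk.le
  have : pp z ^ 2 = (Real.pi / 2) ^ 2 * z.2 ^ 2 / (1 - z.1 ^ 2) := by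
    unfold pp
    rw [div_pow, Real.sq_sqrt h1.le]; ring
  rw [this, div_lt_iff₀ h1]
  have h2 : (Real.pi / 2) ^ 2 * z.2 ^ 2 / k ^ 2 < 1 - z.1 ^ 2 := by linarith
  rw [div_lt_iff₀ (by positivity)] at h2
  linarith

def Mm (z : E2) : E2 := rot (2 * Real.pi * Xi z.1) (Real.sqrt ((1 + pp z) / Real.pi), 0)

lemma N2_Mm {z : E2} (hz : z ∈ VM) : N2 (Mm z) = (1 + pp z) / Real.pi := by
  rw [Mm, N2_rot]
  have := (abs_lt.1 hz.2).1
  have hp := Real.pi_pos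
  have : 0 ≤ (1 + pp z) / Real.pi := div_nonneg (by linarith) hp.le
  simp [N2, Real.sq_sqrt this]

lemma Mm_inj : InjOn Mm VM := by
  intro z hz w hw h
  have hp := Real.pi_pos
  have hN : pp z = pp w := by
    have := congrArg N2 h
    rw [N2_Mm hz, N2_Mm hw] at this
    field_simp at this
    linarith
  have hpos : 0 < Real.sqrt ((1 + pp w) / Real.pi) :=
    Real.sqrt_pos.2 (div_pos (by linarith [(abs_lt.1 hw.2).1]) hp)
  simp only [Mm, rot, Prod.mk.injEq, hN, zero_mul, sub_zero, add_zero] at h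
  have hc := mul_left_cancel₀ hpos.ne' h.1
  have hs := mul_left_cancel₀ hpos.ne' h.2
  have ha := Real.Angle.cos_sin_inj hc hs
  rw [Real.Angle.angle_eq_iff_two_pi_dvd_sub] at ha
  obtain ⟨k, hk⟩ := ha
  have hk' : Xi z.1 - Xi w.1 = k := by
    have : 2 * Real.pi * (Xi z.1 - Xi w.1) = 2 * Real.pi * k := by linarith
    exact mul_left_cancel₀ (by positivity) this
  have r1 := Xi_range hz.1
  have r2 := Xi_range hw.1
  have k0 : k = 0 := by
    have a1 : (k : ℝ) < 1 := by linarith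
    have a2 : (-1 : ℝ) < k := by linarith
    have a1' : k < 1 := by exact_mod_cast a1
    have a2' : -1 < k := by exact_mod_cast a2
    omega
  subst k0
  have hX : Xi z.1 = Xi w.1 := by simpa [sub_eq_zero] using hk'
  have mem : ∀ {t : ℝ}, t ^ 2 < 1 → t ∈ Icc (-1 : ℝ) 1 := fun {t} h =>
    ⟨by nlinarith, by nlinarith⟩
  have e1 := Xi_mono.injOn (mem hz.1) (mem hw.1) hX
  have hq : 0 < Real.sqrt (1 - w.1 ^ 2) := Real.sqrt_pos.2 (by linarith [hw.1])
  have e2 : z.2 = w.2 := by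
    unfold pp at hN
    rw [e1] at hN
    field_simp at hN
    linarith
  exact Prod.ext e1 e2

lemma Mm_Ar : Ar Mm VM := by
  refine ⟨Mm_inj, fun z hz => ?_⟩
  have hp := Real.pi_pos
  have h0 : 0 < 1 - z.1 ^ 2 := by linarith [hz.1]
  have hs := Real.sqrt_pos.2 h0
  have h1 : 0 < (1 + pp z) / Real.pi := div_pos (by linarith [(abs_lt.1 hz.2).1]) hp
  have hs1 := Real.sqrt_pos.2 h1
  constructor
  · have a0 : ContDiffAt ℝ ∞ (fun z : E2 => Real.sqrt (1 - z.1 ^ 2)) z :=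
      ContDiffAt.sqrt (by fun_prop) h0.ne'
    have a1 : ContDiffAt ℝ ∞ pp z := ContDiffAt.div (by fun_prop) a0 hs.ne'
    have a2 : ContDiffAt ℝ ∞ (fun z => Real.sqrt ((1 + pp z) / Real.pi)) z :=
      ContDiffAt.sqrt (by fun_prop) h1.ne'
    have a3 : ContDiffAt ℝ ∞ (fun z : E2 => Xi z.1) z :=
      ContDiffAt.comp (g := Xi) (f := Prod.fst) z (Xi_smooth hz.1) contDiffAt_fst
    have a4 : ContDiffAt ℝ ∞ (fun z : E2 => 2 * Real.pi * Xi z.1) z := by fun_prop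
    have a5 := a4.sin
    have a6 := a4.cos
    unfold Mm rot
    refine ContDiffAt.prodMk ?_ ?_ <;> fun_prop
  · intro u v
    have hx : HasFDerivAt (fun z : E2 => z.1) (ContinuousLinearMap.fst ℝ ℝ ℝ) z := hasFDerivAt_fst
    have hy : HasFDerivAt (fun z : E2 => z.2) (ContinuousLinearMap.snd ℝ ℝ ℝ) z := hasFDerivAt_snd
    have b1 := (Xi_deriv hz.1).comp_hasFDerivAt z hx
    have b2 := b1.const_mul (2 * Real.pi)
    have c1 := (((hx.pow 2).const_sub 1).sqrt h0.ne')
    have c2 := (hy.const_mul (-(Real.pi / 2))).mul ((hasDerivAt_inv hs.ne').comp_hasFDerivAt z c1)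
    have c3 : HasFDerivAt pp _ z := c2
    have c4 := ((c3.const_add 1).mul_const Real.pi⁻¹).sqrt (by rw [← div_eq_mul_inv]; exact h1.ne')
    obtain ⟨L, hL, eL⟩ := rot_fderiv b2 c4 (hasFDerivAt_const (0 : ℝ) z)
    have hM : HasFDerivAt Mm L z := by
      refine hL.congr_of_eventuallyEq ?_
      filter_upwards with y
      simp [Mm, div_eq_mul_inv]
    rw [hM.fderiv, eL]
    simp [w2]
    rw [← div_eq_mul_inv]
    generalize Real.sqrt ((1 + pp z) / Real.pi) = R at *
    generalize Real.sqrt (1 - z.1 ^ 2) = s at *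
    field_simp
    ring

lemma rot_rot (a b : ℝ) (z : E2) : rot a (rot b z) = rot (a + b) z := by
  simp only [rot, Real.cos_add, Real.sin_add]
  ext <;> simp <;> ring

lemma rot_zero (z : E2) : rot 0 z = z := by simp [rot]

def DD : Set E2 := {z | N2 z < 2 / Real.pi}

def TT (z : E2) : ℝ := 4 / Real.pi - N2 z

lemma N2_nonneg (z : E2) : 0 ≤ N2 z := by unfold N2; positivity

lemma TT_gt {z : E2} (hz : z ∈ DD) : 2 / Real.pi < TT z := by
  have : N2 z < 2 / Real.pi := hz
  have e : 4 / Real.pi = 2 / Real.pi + 2 / Real.pi := by ring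
  unfold TT; linarith

lemma TT_pos {z : E2} (hz : z ∈ DD) : 0 < TT z :=
  lt_trans (div_pos two_pos Real.pi_pos) (TT_gt hz)

lemma DD_open : IsOpen DD := by
  unfold DD N2
  exact isOpen_lt (by fun_prop) (by fun_prop)

def Aa (z : E2) : E2 := rot (-(z.1 * z.2) / TT z) z
def Bb (z : E2) : E2 := (z.1 * Real.sqrt (TT z), z.2 / Real.sqrt (TT z))

lemma N2_Aa (z : E2) : N2 (Aa z) = N2 z := N2_rot _ _

lemma Aa_inj : InjOn Aa DD := by
  intro z hz w hw h
  have hN : N2 z = N2 w := by rw [← N2_Aa z, h, N2_Aa]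
  have hT : TT z = TT w := by simp [TT, hN]
  have hTp := TT_pos hz
  have hNT : N2 z < TT z := lt_trans hz (TT_gt hz)
  have hn := N2_nonneg z
  set a := -(z.1 * z.2) / TT z with ha
  set b := -(w.1 * w.2) / TT z with hb
  have h1 : rot a z = rot b w := by rw [ha, hb, hT]; rw [← hT, ← ha]; simpa [Aa, hT, ha] using h
  have h2 : w = rot (a - b) z := by
    have := congrArg (rot (-b)) h1
    rw [rot_rot, rot_rot, neg_add_cancel, rot_zero] at this
    rw [← this]; congr 1; ring
  set d := a - b with hd
  have h3 : TT z * d = w.1 * w.2 - z.1 * z.2 := by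
    rw [hd, ha, hb]; field_simp; ring
  have h4 : TT z * d = Real.sin d * ((z.1 ^ 2 - z.2 ^ 2) * Real.cos d - 2 * z.1 * z.2 * Real.sin d) := by
    rw [h3, h2]; simp only [rot]
    linear_combination (z.1 * z.2) * Real.sin_sq_add_cos_sq d
  have h5 : |(z.1 ^ 2 - z.2 ^ 2) * Real.cos d - 2 * z.1 * z.2 * Real.sin d| ≤ N2 z := by
    apply abs_le_of_sq_le_sq _ hn
    have e := Real.sin_sq_add_cos_sq d
    have : N2 z ^ 2 - ((z.1 ^ 2 - z.2 ^ 2) * Real.cos d - 2 * z.1 * z.2 * Real.sin d) ^ 2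
        = ((z.1 ^ 2 - z.2 ^ 2) * Real.sin d + 2 * z.1 * z.2 * Real.cos d) ^ 2 := by
      unfold N2
      linear_combination -(z.1 ^ 2 + z.2 ^ 2) ^ 2 * e
    nlinarith [sq_nonneg ((z.1 ^ 2 - z.2 ^ 2) * Real.sin d + 2 * z.1 * z.2 * Real.cos d)]
  have h6 : TT z * |d| ≤ |d| * N2 z := by
    calc TT z * |d| = |TT z * d| := by rw [abs_mul, abs_of_pos hTp]
      _ = |Real.sin d| * _ := by rw [h4, abs_mul]
      _ ≤ |d| * N2 z := mul_le_mul Real.abs_sin_le_abs h5 (abs_nonneg _) (abs_nonneg _)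
  have h7 : d = 0 := by
    by_contra hne
    have := abs_pos.2 hne
    nlinarith
  rw [h2, h7, rot_zero]

lemma Aa_surj {z : E2} (hz : z ∈ DD) : ∃ w ∈ DD, Aa w = z := by
  have hTp := TT_pos hz
  have hNT : N2 z < TT z := lt_trans hz (TT_gt hz)
  have hn := N2_nonneg z
  let h : ℝ → ℝ := fun t => TT z * t + (rot (-t) z).1 * (rot (-t) z).2
  have hc : Continuous h := by
    simp only [h, rot]; fun_prop
  have hb : ∀ t, |(rot (-t) z).1 * (rot (-t) z).2| ≤ N2 z := by
    intro t
    rw [← N2_rot (-t) z, abs_le]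
    generalize rot (-t) z = y
    unfold N2
    constructor <;> nlinarith [sq_nonneg (y.1 + y.2), sq_nonneg (y.1 - y.2), sq_nonneg y.1, sq_nonneg y.2]
  have hm : (0 : ℝ) ∈ h '' Icc (-1) 1 := by
    apply intermediate_value_Icc (by norm_num) hc.continuousOn
    have a1 := abs_le.1 (hb 1)
    have a2 := abs_le.1 (hb (-1))
    constructor <;> simp only [h] <;> linarith
  obtain ⟨t, -, ht⟩ := hm
  have hN : N2 (rot (-t) z) = N2 z := N2_rot _ _
  refine ⟨rot (-t) z, by change N2 _ < _; rw [hN]; exact hz, ?_⟩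
  have hT : TT (rot (-t) z) = TT z := by simp [TT, hN]
  have : -((rot (-t) z).1 * (rot (-t) z).2) / TT z = t := by
    field_simp
    simp only [h] at ht
    linarith
  rw [Aa, hT, this, rot_rot, add_neg_cancel, rot_zero]

lemma AB_deriv {z : E2} (hz : z ∈ DD) : ∃ LA LB : E2 →L[ℝ] E2, ∃ J : ℝ, J ≠ 0 ∧
    HasFDerivAt Aa LA z ∧ HasFDerivAt Bb LB z ∧ (∀ u v, w2 (LA u) (LA v) = J * w2 u v) ∧
    (∀ u v, w2 (LB u) (LB v) = J * w2 u v) := by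
  have hTp := TT_pos hz
  have hNT : N2 z < TT z := lt_trans hz (TT_gt hz)
  have hx : HasFDerivAt (fun z : E2 => z.1) (ContinuousLinearMap.fst ℝ ℝ ℝ) z := hasFDerivAt_fst
  have hy : HasFDerivAt (fun z : E2 => z.2) (ContinuousLinearMap.snd ℝ ℝ ℝ) z := hasFDerivAt_snd
  obtain ⟨T', hT', eT⟩ := ph_fderiv (4 / Real.pi) (-1) 0 hx hy
  have hT : HasFDerivAt TT T' z := by
    refine hT'.congr_of_eventuallyEq ?_
    filter_upwards with y
    simp [TT, ph, sub_eq_add_neg]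
  have hη := (hx.mul hy).neg.mul ((hasDerivAt_inv hTp.ne').comp_hasFDerivAt z hT)
  obtain ⟨LA, hA, eA⟩ := rot_fderiv hη hx hy
  obtain ⟨LB, hB, eB⟩ := scale_fderiv hT hy hx hTp
  refine ⟨LA, ((ContinuousLinearMap.snd ℝ ℝ ℝ).comp LB).prod ((ContinuousLinearMap.fst ℝ ℝ ℝ).comp LB),
    1 - (z.1 ^ 2 - z.2 ^ 2) / TT z, ?_, ?_, ?_, ?_, ?_⟩
  · have : z.1 ^ 2 - z.2 ^ 2 < TT z := by unfold N2 at hNT; nlinarith [sq_nonneg z.2]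
    have : (z.1 ^ 2 - z.2 ^ 2) / TT z < 1 := by rw [div_lt_one hTp]; exact this
    linarith
  · refine hA.congr_of_eventuallyEq ?_
    filter_upwards with y
    simp [Aa, div_eq_mul_inv]
  · exact hB.snd.prodMk hB.fst
  · intro u v
    rw [eA]
    simp [eT, w2]
    field_simp
    ring
  · intro u v
    have := eB u v
    simp [eT, w2] at this ⊢
    have e2 : (LB u).2 * (LB v).1 - (LB u).1 * (LB v).2 = -((LB u).1 * (LB v).2 - (LB u).2 * (LB v).1) := by ring
    rw [e2, this]
    field_simp
    ring

lemma Aa_smooth {z : E2} (hz : z ∈ DD) : ContDiffAt ℝ ∞ Aa z := by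
  have hT : ContDiffAt ℝ ∞ TT z := by unfold TT N2; fun_prop
  have h3 : ContDiffAt ℝ ∞ (fun z : E2 => -(z.1 * z.2) / TT z) z :=
    ContDiffAt.div (by fun_prop) hT (TT_pos hz).ne'
  have h4 := h3.sin
  have h5 := h3.cos
  unfold Aa rot
  refine ContDiffAt.prodMk ?_ ?_ <;> fun_prop

lemma Bb_smooth {z : E2} (hz : z ∈ DD) : ContDiffAt ℝ ∞ Bb z := by
  have hT : ContDiffAt ℝ ∞ TT z := by unfold TT N2; fun_prop
  have hs := hT.sqrt (TT_pos hz).ne'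
  have h3 : ContDiffAt ℝ ∞ (fun z : E2 => z.2 / Real.sqrt (TT z)) z :=
    ContDiffAt.div (by fun_prop) hs (Real.sqrt_pos.2 (TT_pos hz)).ne'
  unfold Bb
  refine ContDiffAt.prodMk ?_ h3
  fun_prop

lemma Bb_eq {z : E2} (hz : z ∈ DD) :
    (Bb z).1 ^ 2 + (Bb z).2 ^ 2 * TT z ^ 2 = (4 / Real.pi - TT z) * TT z := by
  have hTp := TT_pos hz
  have hs := Real.sqrt_pos.2 hTp
  have e := Real.sq_sqrt hTp.le
  simp only [Bb]
  rw [mul_pow, div_pow, e]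
  have h : 4 / Real.pi - TT z = z.1 ^ 2 + z.2 ^ 2 := by unfold TT N2; ring
  rw [h]
  field_simp

lemma Bb_inj : InjOn Bb DD := by
  intro z hz w hw h
  have e1 := Bb_eq hz
  have e2 := Bb_eq hw
  rw [h] at e1
  have t1 := TT_gt hz
  have t2 := TT_gt hw
  have hT : TT z = TT w := by
    by_contra hne
    have : (TT z - TT w) * (((Bb w).2 ^ 2 + 1) * (TT z + TT w) - 4 / Real.pi) = 0 := by
      linear_combination e1 - e2
    rcases mul_eq_zero.1 this with h0 | h0
    · exact hne (by linarith)
    · have e : 4 / Real.pi = 2 / Real.pi + 2 / Real.pi := by ring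
      nlinarith [sq_nonneg (Bb w).2, TT_pos hz, TT_pos hw,
        mul_nonneg (sq_nonneg (Bb w).2) (add_pos (TT_pos hz) (TT_pos hw)).le]
  have hs := Real.sqrt_pos.2 (TT_pos hw)
  simp only [Bb, hT, Prod.mk.injEq] at h
  refine Prod.ext (mul_right_cancel₀ hs.ne' h.1) ?_
  have := h.2
  field_simp at this
  exact this

open Classical in
def Ai (z : E2) : E2 := if h : z ∈ DD then (Aa_surj h).choose else 0

lemma Ai_mem {z : E2} (hz : z ∈ DD) : Ai z ∈ DD := by
  rw [Ai, dif_pos hz]; exact (Aa_surj hz).choose_spec.1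

lemma Aa_Ai {z : E2} (hz : z ∈ DD) : Aa (Ai z) = z := by
  rw [Ai, dif_pos hz]; exact (Aa_surj hz).choose_spec.2

lemma Ai_smooth {z : E2} (hz : z ∈ DD) : ContDiffAt ℝ ∞ Ai z := by
  have hw := Ai_mem hz
  obtain ⟨LA, LB, J, hJ, hA, -, eA, -⟩ := AB_deriv hw
  have hinj : Function.Injective (LA : E2 →ₗ[ℝ] E2) := by
    rw [← LinearMap.ker_eq_bot, LinearMap.ker_eq_bot']
    intro u hu
    have hu : LA u = 0 := hu
    have a1 := eA u (0, 1)
    have a2 := eA u (1, 0)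
    rw [hu] at a1 a2
    simp [w2, hJ] at a1 a2
    exact Prod.ext a1 a2
  let e : E2 ≃L[ℝ] E2 := (LinearEquiv.ofInjectiveEndo (LA : E2 →ₗ[ℝ] E2) hinj).toContinuousLinearEquiv
  have he : HasFDerivAt Aa (e : E2 →L[ℝ] E2) (Ai z) := by
    have : (e : E2 →L[ℝ] E2) = LA := by ext <;> rfl
    rw [this]; exact hA
  have hsm := Aa_smooth hw
  have hl := hsm.to_localInverse he (by simp)
  rw [Aa_Ai hz] at hl
  refine hl.congr_of_eventuallyEq ?_
  have hst : HasStrictFDerivAt Aa (e : E2 →L[ℝ] E2) (Ai z) := hsm.hasStrictFDerivAt' he (by simp)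
  have hr := hst.eventually_right_inverse
  have hcont := hst.localInverse_continuousAt
  have himg : hst.localInverse Aa e (Ai z) (Aa (Ai z)) = Ai z := hst.localInverse_apply_image
  have hev : ∀ᶠ y in nhds (Aa (Ai z)), hst.localInverse Aa e (Ai z) y ∈ DD := by
    apply hcont.eventually_mem
    rw [himg]
    exact DD_open.mem_nhds hw
  rw [Aa_Ai hz] at hr hev
  filter_upwards [hr, hev, DD_open.mem_nhds hz] with y h1 h2 h3
  apply Aa_inj (Ai_mem h3) h2
  rw [Aa_Ai h3]
  exact h1.symm

def Cc (z : E2) : E2 := Bb (Ai z)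

lemma Cc_Ar : Ar Cc DD := by
  constructor
  · intro z hz w hw h
    have := Bb_inj (Ai_mem hz) (Ai_mem hw) h
    rw [← Aa_Ai hz, ← Aa_Ai hw, this]
  · intro z hz
    have hw := Ai_mem hz
    have hs := Ai_smooth hz
    refine ⟨(Bb_smooth hw).comp z hs, fun u v => ?_⟩
    obtain ⟨LA, LB, J, hJ, hA, hB, eA, eB⟩ := AB_deriv hw
    have hd := (hs.differentiableAt (by simp)).hasFDerivAt
    have h1 : HasFDerivAt Cc _ z := hB.comp z hd
    have h2 := hA.comp z hd
    have h3 : HasFDerivAt (Aa ∘ Ai) (ContinuousLinearMap.id ℝ E2) z := by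
      refine (hasFDerivAt_id z).congr_of_eventuallyEq ?_
      filter_upwards [DD_open.mem_nhds hz] with y hy
      exact Aa_Ai hy
    have h4 := h2.unique h3
    have h5 : ∀ u, LA (fderiv ℝ Ai z u) = u := fun u => by
      have := congrArg (fun L => L u) h4
      simpa using this
    rw [h1.fderiv]
    simp only [ContinuousLinearMap.comp_apply]
    rw [eB, ← eA, h5, h5]

lemma Cc_eq {z : E2} (hz : z ∈ DD) :
    (Cc z).1 ^ 2 + (Cc z).2 ^ 2 * TT z ^ 2 = (4 / Real.pi - TT z) * TT z := by
  have := Bb_eq (Ai_mem hz)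
  have e : TT (Ai z) = TT z := by
    have := N2_Aa (Ai z)
    rw [Aa_Ai hz] at this
    simp [TT, this]
  rw [e] at this
  exact this

def qq (z : E2) : ℝ := Real.pi * N2 z - 1

def U0 : Set E4 := {z | N2 z.1 + N2 z.2 < 2 / Real.pi}
def U1 : Set E4 := {z | 0 < 1 - Real.pi / 2 * N2 z.1 ∧
  z.2.1 ^ 2 + (Real.pi / 2) ^ 2 * z.2.2 ^ 2 / (1 - Real.pi / 2 * N2 z.1) ^ 2 < 1}
def U2 : Set E4 := {z | Real.pi / 2 * N2 z.1 < 1 - |qq z.2|}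
def U3 : Set E4 := {z | |qq z.2| < 1 ∧
  z.1.1 ^ 2 + z.1.2 ^ 2 * (2 / Real.pi * (1 + |qq z.2|)) ^ 2 < 4 / Real.pi ^ 2 * (1 - qq z.2 ^ 2)}
def U4 : Set E4 := {z | |qq z.2| < 1 ∧
  z.1.1 ^ 2 + (Real.pi / 2) ^ 2 * z.1.2 ^ 2 / (1 - |qq z.2|) ^ 2 < 1}
def U5 : Set E4 := {z | |qq z.1| + |qq z.2| < 1}

lemma qq_Mm {z : E2} (hz : z ∈ VM) : qq (Mm z) = pp z := by
  rw [qq, N2_Mm hz]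
  have := Real.pi_pos
  field_simp
  ring

lemma mem_DD_iff (z : E2) : z ∈ DD ↔ Real.pi / 2 * N2 z < 1 := by
  have := Real.pi_pos
  change N2 z < 2 / Real.pi ↔ _
  rw [lt_div_iff₀ this]
  constructor <;> intro h <;> linarith

lemma st1 : Sy (Tw (2 / Real.pi) (-1) 0) U0 ∧ MapsTo (Tw (2 / Real.pi) (-1) 0) U0 U1 := by
  have hp := Real.pi_pos
  have key : ∀ z ∈ U0, 0 < ph (2 / Real.pi) (-1) 0 (N2 z.1) := by
    intro z hz
    have hz : N2 z.1 + N2 z.2 < 2 / Real.pi := hz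
    have := N2_nonneg z.2
    simp only [ph]; linarith
  refine ⟨(Tw_Sy _ _ _).mono key, fun z hz => ?_⟩
  have h0 := key z hz
  have hz : N2 z.1 + N2 z.2 < 2 / Real.pi := hz
  have h1 : 1 - Real.pi / 2 * N2 z.1 = Real.pi / 2 * ph (2 / Real.pi) (-1) 0 (N2 z.1) := by
    simp only [ph]; field_simp; ring
  have h2 : N2 z.2 < ph (2 / Real.pi) (-1) 0 (N2 z.1) := by
    simp only [ph]; linarith
  simp only [U1, mem_ofPred_eq, Tw, N2_rot, h1]
  generalize ph (2 / Real.pi) (-1) 0 (N2 z.1) = S at *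
  refine ⟨by positivity, ?_⟩
  rw [div_pow, mul_pow, Real.sq_sqrt h0.le]
  have : z.2.1 ^ 2 / S + (Real.pi / 2) ^ 2 * (z.2.2 ^ 2 * S) / (Real.pi / 2 * S) ^ 2
      = N2 z.2 / S := by
    unfold N2; field_simp
  rw [this, div_lt_one h0]
  exact h2

lemma st2 : Sy (Prod.map id Mm) U1 ∧ MapsTo (Prod.map id Mm) U1 U2 := by
  have hp := Real.pi_pos
  have key : ∀ z ∈ U1, z.2 ∈ VM ∧ |pp z.2| < 1 - Real.pi / 2 * N2 z.1 := by
    intro z hz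
    obtain ⟨a, b⟩ := pp_lt hz.1 hz.2
    have := N2_nonneg z.1
    have : 0 ≤ Real.pi / 2 * N2 z.1 := by positivity
    exact ⟨⟨a, by linarith⟩, b⟩
  refine ⟨((Ar_id univ).prod Mm_Ar).mono fun z hz => ⟨mem_univ _, (key z hz).1⟩, fun z hz => ?_⟩
  obtain ⟨a, b⟩ := key z hz
  simp only [U2, mem_ofPred_eq, Prod.map, id, qq_Mm a]
  linarith

lemma st3 : Sy (Prod.map Cc id) U2 ∧ MapsTo (Prod.map Cc id) U2 U3 := by
  have hp := Real.pi_pos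
  have key : ∀ z ∈ U2, z.1 ∈ DD := by
    intro z hz
    have hz : Real.pi / 2 * N2 z.1 < 1 - |qq z.2| := hz
    rw [mem_DD_iff]
    linarith [abs_nonneg (qq z.2)]
  refine ⟨(Cc_Ar.prod (Ar_id univ)).mono fun z hz => ⟨key z hz, mem_univ _⟩, fun z hz => ?_⟩
  have hD := key z hz
  have hz : Real.pi / 2 * N2 z.1 < 1 - |qq z.2| := hz
  have hn := N2_nonneg z.1
  have e := Cc_eq hD
  have h0 : 0 ≤ Real.pi / 2 * N2 z.1 := by positivity
  refine ⟨by simp only [Prod.map, id]; linarith, ?_⟩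
  simp only [Prod.map, id]
  have ha := abs_nonneg (qq z.2)
  have hT1 : 2 / Real.pi * (1 + |qq z.2|) < TT z.1 := by
    have : TT z.1 = 2 / Real.pi * (2 - Real.pi / 2 * N2 z.1) := by
      unfold TT; field_simp; ring
    rw [this]
    apply mul_lt_mul_of_pos_left _ (by positivity)
    linarith
  have hrhs : 4 / Real.pi ^ 2 * (1 - qq z.2 ^ 2) =
      (4 / Real.pi - 2 / Real.pi * (1 + |qq z.2|)) * (2 / Real.pi * (1 + |qq z.2|)) := by
    rw [← sq_abs (qq z.2)]; field_simp; ring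
  have hge : 2 / Real.pi ≤ 2 / Real.pi * (1 + |qq z.2|) :=
    le_mul_of_one_le_right (by positivity) (by linarith)
  have e4 : 4 / Real.pi = 2 * (2 / Real.pi) := by ring
  rw [hrhs]
  rw [e4] at e ⊢
  have hc : 0 < 2 / Real.pi := by positivity
  generalize 2 / Real.pi * (1 + |qq z.2|) = S at *
  generalize 2 / Real.pi = c at *
  generalize TT z.1 = T at *
  have h1 : 0 < (T - S) * (T + S - 2 * c) := mul_pos (by linarith) (by linarith)
  have h2 : 0 ≤ (Cc z.1).2 ^ 2 * ((T - S) * (T + S)) :=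
    mul_nonneg (sq_nonneg _) (mul_nonneg (by linarith) (by linarith))
  nlinarith

def Tw' (z : E4) : E4 := Prod.swap (Tw 0 (8 / Real.pi) (-4) (Prod.swap z))

lemma st4 : Sy Tw' U3 ∧ MapsTo Tw' U3 U4 := by
  have hp := Real.pi_pos
  have hph : ∀ z : E2, ph 0 (8 / Real.pi) (-4) (N2 z) = 4 / Real.pi ^ 2 * (1 - qq z ^ 2) := by
    intro z
    simp only [ph, qq]; field_simp; ring
  have key : ∀ z ∈ U3, 0 < ph 0 (8 / Real.pi) (-4) (N2 z.2) := by
    intro z hz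
    rw [hph]
    have : qq z.2 ^ 2 < 1 := by rw [← sq_abs]; nlinarith [hz.1, abs_nonneg (qq z.2)]
    have : 0 < 1 - qq z.2 ^ 2 := by linarith
    positivity
  refine ⟨?_, fun z hz => ?_⟩
  · have h1 := (Tw_Sy 0 (8 / Real.pi) (-4)).comp (Sy_swap U3) (fun z hz => key z hz)
    exact (Sy_swap univ).comp h1 (mapsTo_univ _ _)
  · have h0 := key z hz
    obtain ⟨h1, h2⟩ := hz
    have hq : qq (Tw' z).2 = qq z.2 := by
      simp [Tw', Tw, qq, N2_rot]
    refine ⟨by rw [hq]; exact h1, ?_⟩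
    rw [hq]
    simp only [Tw', Tw, Prod.swap]
    rw [div_pow, mul_pow, Real.sq_sqrt h0.le]
    rw [hph] at h0 ⊢
    have ha := abs_nonneg (qq z.2)
    rw [← sq_abs (qq z.2)] at h0 h2 ⊢
    generalize |qq z.2| = q at *
    have hq1 : 0 < 1 - q := by linarith
    have hq2 : 0 < 1 + q := by linarith
    have e : 1 - q ^ 2 = (1 - q) * (1 + q) := by ring
    have : z.1.1 ^ 2 / (4 / Real.pi ^ 2 * (1 - q ^ 2)) +
        (Real.pi / 2) ^ 2 * (z.1.2 ^ 2 * (4 / Real.pi ^ 2 * (1 - q ^ 2))) / (1 - q) ^ 2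
        = (z.1.1 ^ 2 + z.1.2 ^ 2 * (2 / Real.pi * (1 + q)) ^ 2) / (4 / Real.pi ^ 2 * (1 - q ^ 2)) := by
      rw [e]; field_simp; ring
    rw [this, div_lt_one h0]
    exact h2

lemma st5 : Sy (Prod.map Mm id) U4 ∧ MapsTo (Prod.map Mm id) U4 U5 := by
  have key : ∀ z ∈ U4, z.1 ∈ VM ∧ |pp z.1| < 1 - |qq z.2| := by
    intro z hz
    obtain ⟨a, b⟩ := pp_lt (by linarith [hz.1]) hz.2
    exact ⟨⟨a, by linarith [abs_nonneg (qq z.2)]⟩, b⟩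
  refine ⟨(Mm_Ar.prod (Ar_id univ)).mono fun z hz => ⟨(key z hz).1, mem_univ _⟩, fun z hz => ?_⟩
  obtain ⟨a, b⟩ := key z hz
  simp only [U5, mem_ofPred_eq, Prod.map, id, qq_Mm a]
  linarith

lemma main_embedding : ∃ f : E4 → E4, Sy f U0 ∧ MapsTo f U0 U5 := by
  have s2 := st2.1.comp st1.1 st1.2
  have m2 := st2.2.comp st1.2
  have s3 := st3.1.comp s2 m2
  have m3 := st3.2.comp m2
  have s4 := st4.1.comp s3 m3
  have m4 := st4.2.comp m3
  exact ⟨_, st5.1.comp s4 m4, st5.2.comp m4⟩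

def phi : (ℂ × ℂ) ≃L[ℝ] E4 :=
  Complex.equivRealProdCLM.prodCongr Complex.equivRealProdCLM

lemma phi_apply (z : ℂ × ℂ) : phi z = ((z.1.re, z.1.im), (z.2.re, z.2.im)) := rfl

lemma stdSymp4_eq (u v : ℂ × ℂ) : stdSymp4 u v = w4 (phi u) (phi v) := by
  simp [stdSymp4, phi_apply, w4, w2]; ring

lemma normSq_eq_N2 (z : ℂ) (w : E2) (h : w = (z.re, z.im)) : Complex.normSq z = N2 w := by
  subst h
  rw [Complex.normSq_apply, N2]; ring

lemma ball4_open (r : ℝ) : IsOpen (ball4 r) := by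
  unfold ball4
  exact isOpen_lt (by have := Complex.continuous_normSq; fun_prop) (by fun_prop)

lemma embeds_of_Sy {f : E4 → E4} {U V : Set E4} {r : ℝ} {W : Set (ℂ × ℂ)} (hf : Sy f U)
    (hm : MapsTo f U V) (hU : ∀ z ∈ ball4 r, phi z ∈ U) (hV : ∀ z, phi z ∈ V → z ∈ W) :
    SymplecticEmbeds4 (ball4 r) W := by
  have hsm : ∀ z ∈ ball4 r, ContDiffAt ℝ ∞ (phi.symm ∘ f ∘ phi) z := by
    intro z hz
    have h1 := (hf.2 _ (hU z hz)).1
    exact phi.symm.contDiff.contDiffAt.comp z (h1.comp z phi.contDiff.contDiffAt)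
  refine ⟨phi.symm ∘ f ∘ phi, fun z hz => (hsm z hz).contDiffWithinAt, ?_, ?_, ?_⟩
  · intro z hz w hw h
    have := phi.symm.injective h
    exact phi.injective (hf.1 (hU z hz) (hU w hw) this)
  · intro z hz
    apply hV
    simpa using hm (hU z hz)
  · intro z hz u v
    obtain ⟨h1, h2⟩ := hf.2 _ (hU z hz)
    have hd : HasFDerivAt (phi.symm ∘ f ∘ phi)
        ((phi.symm : E4 →L[ℝ] ℂ × ℂ).comp ((fderiv ℝ f (phi z)).comp (phi : (ℂ × ℂ) →L[ℝ] E4))) z :=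
      phi.symm.hasFDerivAt.comp z
        ((h1.differentiableAt (by simp)).hasFDerivAt.comp z phi.hasFDerivAt)
    rw [fderivWithin_of_isOpen (ball4_open r) hz, hd.fderiv]
    simp [stdSymp4_eq, h2]

/-- The symplectic form as a bilinear form. -/
def sympB : LinearMap.BilinForm ℝ (ℂ × ℂ) :=
  LinearMap.mk₂ ℝ stdSymp4
    (by intro a b c; simp [stdSymp4]; ring) (by intro a b c; simp [stdSymp4]; ring)
    (by intro a b c; simp [stdSymp4]; ring) (by intro a b c; simp [stdSymp4]; ring)

lemma sympB_apply (u v : ℂ × ℂ) : sympB u v = stdSymp4 u v := rfl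

lemma sympB_nondeg : sympB.Nondegenerate := by
  apply LinearMap.BilinForm.Nondegenerate.ofSeparatingLeft
  intro u hu
  have h1 := hu (1, 0)
  have h2 := hu (Complex.I, 0)
  have h3 := hu (0, 1)
  have h4 := hu (0, Complex.I)
  simp [sympB_apply, stdSymp4] at h1 h2 h3 h4
  exact Prod.ext (Complex.ext h2 h1) (Complex.ext h4 h3)

lemma abs_det_of_symp (L : (ℂ × ℂ) →L[ℝ] (ℂ × ℂ))
    (h : ∀ u v, stdSymp4 (L u) (L v) = stdSymp4 u v) : |L.det| = 1 := by
  let b := Complex.basisOneI.prod Complex.basisOneI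
  have h1 : sympB.comp (L : (ℂ × ℂ) →ₗ[ℝ] (ℂ × ℂ)) (L : (ℂ × ℂ) →ₗ[ℝ] (ℂ × ℂ)) = sympB := by
    apply LinearMap.ext₂
    intro u v
    exact h u v
  have h2 := LinearMap.BilinForm.toMatrix_comp b b sympB (L : (ℂ × ℂ) →ₗ[ℝ] (ℂ × ℂ)) (L : (ℂ × ℂ) →ₗ[ℝ] (ℂ × ℂ))
  rw [h1] at h2
  have h3 := congrArg Matrix.det h2
  have h4 := (LinearMap.BilinForm.nondegenerate_iff_det_ne_zero b).1 sympB_nondeg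
  rw [Matrix.det_mul, Matrix.det_mul, Matrix.det_transpose, LinearMap.det_toMatrix] at h3
  have h5 : L.det * L.det = 1 := by
    change LinearMap.det (L : (ℂ × ℂ) →ₗ[ℝ] (ℂ × ℂ)) * LinearMap.det (L : (ℂ × ℂ) →ₗ[ℝ] (ℂ × ℂ)) = 1
    apply mul_left_cancel₀ h4
    linear_combination -h3
  have h6 : |L.det| * |L.det| = 1 := by rw [← abs_mul, h5, abs_one]
  nlinarith [abs_nonneg L.det]

instance haarCC : MeasureTheory.Measure.IsAddHaarMeasure (MeasureTheory.volume : MeasureTheory.Measure (ℂ × ℂ)) :=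
  MeasureTheory.Measure.prod.instIsAddHaarMeasure _ _

open MeasureTheory in
lemma volume_le_of_embeds {r : ℝ} {W : Set (ℂ × ℂ)} (h : SymplecticEmbeds4 (ball4 r) W) :
    volume (ball4 r) ≤ volume W := by
  obtain ⟨f, hs, hi, hm, hd⟩ := h
  have h1 := lintegral_abs_det_fderiv_eq_addHaar_image (volume : Measure (ℂ × ℂ))
    (s := ball4 r) (f := f) (f' := fun x => fderivWithin ℝ f (ball4 r) x) (ball4_open r).measurableSet
    (fun x hx => ((hs x hx).differentiableWithinAt (by simp)).hasFDerivWithinAt) hi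
  have h2 : ∫⁻ x in ball4 r, ENNReal.ofReal |(fderivWithin ℝ f (ball4 r) x).det| = volume (ball4 r) := by
    rw [setLIntegral_congr_fun (g := fun _ => 1) (ball4_open r).measurableSet]
    · simp
    · intro x hx
      simp [abs_det_of_symp _ (hd x hx)]
  rw [← h2, h1]
  exact measure_mono hm.image_subset

open MeasureTheory in
lemma radius_le {r : ℝ} (hr : 0 < r) {W : Set (ℂ × ℂ)} (hW : W ⊆ Metric.closedBall 0 1)
    (h : SymplecticEmbeds4 (ball4 r) W) : r ≤ 2 := by
  have h1 := (volume_le_of_embeds h).trans (measure_mono hW)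
  have h2 : Metric.ball (0 : ℂ × ℂ) (r / 2) ⊆ ball4 r := by
    intro z hz
    rw [mem_ball_zero_iff, Prod.norm_def, max_lt_iff] at hz
    change Complex.normSq z.1 + Complex.normSq z.2 < r ^ 2
    rw [Complex.normSq_eq_norm_sq, Complex.normSq_eq_norm_sq]
    nlinarith [norm_nonneg z.1, norm_nonneg z.2, hz.1, hz.2]
  have h3 := (measure_mono h2).trans h1
  rw [Measure.addHaar_closedBall_eq_addHaar_ball, Measure.addHaar_ball_of_pos _ _ (by positivity)] at h3
  have h4 : 0 < volume (Metric.ball (0 : ℂ × ℂ) 1) := Metric.measure_ball_pos _ _ one_pos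
  have h5 : volume (Metric.ball (0 : ℂ × ℂ) 1) ≠ ⊤ := measure_ball_lt_top.ne
  have h6 : ENNReal.ofReal ((r / 2) ^ Module.finrank ℝ (ℂ × ℂ)) ≤ 1 := by
    rw [← ENNReal.mul_le_mul_iff_left h4.ne' h5, one_mul]
    exact h3
  have h7 : Module.finrank ℝ (ℂ × ℂ) = 4 := by simp
  rw [h7, ENNReal.ofReal_le_one] at h6
  by_contra hc
  have : 1 < r / 2 := by linarith
  have := one_lt_pow₀ this (n := 4) (by norm_num)
  linarith

def QQ : Set (ℝ × ℝ) := convexHull ℝ {((1 : ℝ), (0 : ℝ)), (2, 1), (1, 2), (0, 1)}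

lemma mem_QQ {x : ℝ × ℝ} (h : |x.1 - 1| + |x.2 - 1| < 1) : x ∈ QQ := by
  have hc : Convex ℝ QQ := convex_convexHull _ _
  have v1 : ((1 : ℝ), (0 : ℝ)) ∈ QQ := subset_convexHull _ _ (by simp)
  have v2 : ((2 : ℝ), (1 : ℝ)) ∈ QQ := subset_convexHull _ _ (by simp)
  have v3 : ((1 : ℝ), (2 : ℝ)) ∈ QQ := subset_convexHull _ _ (by simp)
  have v4 : ((0 : ℝ), (1 : ℝ)) ∈ QQ := subset_convexHull _ _ (by simp)
  have ha := abs_lt.1 (show |x.1 - 1| < 1 - |x.2 - 1| by linarith)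
  have hb1 := neg_abs_le (x.2 - 1)
  have hb2 := le_abs_self (x.2 - 1)
  set b := |x.2 - 1|
  have := hc.sum_mem (t := Finset.univ)
    (w := ![(b - (x.2 - 1)) / 2, (1 - b + (x.1 - 1)) / 2, (b + (x.2 - 1)) / 2, (1 - b - (x.1 - 1)) / 2])
    (z := ![((1 : ℝ), (0 : ℝ)), (2, 1), (1, 2), (0, 1)])
    (by intro i _; fin_cases i <;> simp <;> linarith)
    (by simp [Fin.sum_univ_four]; ring)
    (by intro i _; fin_cases i <;> simpa)
  convert this using 1
  ext <;> simp [Fin.sum_univ_four] <;> ring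

lemma mem_int_QQ {x : ℝ × ℝ} (h : |x.1 - 1| + |x.2 - 1| < 1) : x ∈ interior QQ := by
  refine mem_interior.2 ⟨{x | |x.1 - 1| + |x.2 - 1| < 1}, fun y hy => mem_QQ hy, ?_, h⟩
  exact isOpen_lt (by fun_prop) (by fun_prop)

lemma QQ_bdd : mu4 ⁻¹' interior QQ ⊆ Metric.closedBall 0 1 := by
  have h1 : QQ ⊆ Icc (0, 0) (2, 2) := by
    apply convexHull_min _ (convex_Icc _ _)
    intro x hx
    simp only [mem_insert_iff, mem_singleton_iff] at hx
    rcases hx with rfl | rfl | rfl | rfl <;> simp [Prod.le_def]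
  intro z hz
  obtain ⟨-, h3⟩ := h1 (interior_subset hz)
  have h3a : Real.pi * Complex.normSq z.1 ≤ 2 := h3.1
  have h3b : Real.pi * Complex.normSq z.2 ≤ 2 := h3.2
  have hpi := Real.pi_gt_three
  rw [Complex.normSq_eq_norm_sq] at h3a h3b
  have aux : ∀ t : ℝ, 0 ≤ t → Real.pi * t ^ 2 ≤ 2 → t ≤ 1 := by
    intro t ht h
    by_contra hc
    have : 1 < t ^ 2 := by nlinarith
    nlinarith
  rw [mem_closedBall_zero_iff, Prod.norm_def]
  exact max_le (aux _ (norm_nonneg _) h3a) (aux _ (norm_nonneg _) h3b)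

/-- For `Q = conv{(1,0),(2,1),(1,2),(0,1)}`, the open ball `B⁴(√(2/π))` (of Gromov
area `2`) symplectically embeds into `X_{int(Q)} = μ⁻¹(interior Q)`; in particular
the Gromov width of `X_{int(Q)}` is at least `2`. -/
theorem ball_embeds_into_shifted_l1_codisc
    (Q : Set (ℝ × ℝ))
    (hQ : Q = convexHull ℝ {((1 : ℝ), (0 : ℝ)), (2, 1), (1, 2), (0, 1)}) :
    SymplecticEmbeds4 (ball4 (Real.sqrt (2 / Real.pi))) (mu4 ⁻¹' interior Q) ∧
    2 ≤ gromovWidth4 (mu4 ⁻¹' interior Q) := by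
  have hQ' : Q = QQ := hQ
  rw [hQ']
  have hp := Real.pi_pos
  have h2 : 0 < 2 / Real.pi := by positivity
  have hE : SymplecticEmbeds4 (ball4 (Real.sqrt (2 / Real.pi))) (mu4 ⁻¹' interior QQ) := by
    obtain ⟨f, hf, hm⟩ := main_embedding
    refine embeds_of_Sy hf hm ?_ ?_
    · intro z hz
      have hz : Complex.normSq z.1 + Complex.normSq z.2 < Real.sqrt (2 / Real.pi) ^ 2 := hz
      rw [Real.sq_sqrt h2.le, normSq_eq_N2 z.1 _ rfl, normSq_eq_N2 z.2 _ rfl] at hz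
      exact hz
    · intro z hz
      apply mem_int_QQ
      simp only [mu4]
      rw [normSq_eq_N2 z.1 _ rfl, normSq_eq_N2 z.2 _ rfl]
      exact hz
  refine ⟨hE, ?_⟩
  apply le_csSup
  · refine ⟨Real.pi * 2 ^ 2, ?_⟩
    rintro t ⟨r, hr, rfl, he⟩
    have := radius_le hr QQ_bdd he
    gcongr
  · exact ⟨_, Real.sqrt_pos.2 h2, by rw [Real.sq_sqrt h2.le]; field_simp, hE⟩
end
end
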